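/- Assume f ∈ L^∞(Ω) and u ∈ H²(Ω). Then there exists N₀ such that for every N ≥ N₀ there exists at least one N-element mesh that is equidistributing for the adaptation function ρ computed from its own finite element solution; that is, a mesh 0 = x₀ < ⋯ < x_N = 1 such that, with u_h its finite element solution and ρ_i, σ_h defined from u_h, the relations ρ_i h_i = σ_h / N hold for i = 1, …, N. -/

import Mathlib

/-!
Setting of Huang–He, "Error analysis for equidistributing meshes":
the boundary value problem  −(a u')' + b u' + c u = f on Ω = (0,1), u(0)=u(1)=0,
its linear finite element discretization on a mesh 0 = x₀ < ⋯ < x_N = 1,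
and the residual-based equidistribution quantities.
-/

noncomputable section
open MeasureTheory Real

namespace EquidMesh

/-- L² norm on (0,1). -/
def L2 (g : ℝ → ℝ) : ℝ := Real.sqrt (∫ t in (0:ℝ)..1, (g t)^2)

/-- L¹ norm on (0,1). -/
def L1 (g : ℝ → ℝ) : ℝ := ∫ t in (0:ℝ)..1, |g t|

/-- The L^{2/3} quasi-norm on (0,1): (∫₀¹ |g|^{2/3})^{3/2}. -/
def Lp23 (g : ℝ → ℝ) : ℝ := (∫ t in (0:ℝ)..1, |g t| ^ ((2:ℝ)/3)) ^ ((3:ℝ)/2)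

/-- L^∞ norm (essential supremum of |g|) on (0,1). -/
def Linf (g : ℝ → ℝ) : ℝ := essSup (fun t => |g t|) (volume.restrict (Set.Ioo (0:ℝ) 1))

/-- Membership in L²(0,1). -/
def MemL2 (g : ℝ → ℝ) : Prop :=
  Measurable g ∧ IntervalIntegrable (fun t => (g t)^2) volume 0 1

/-- Membership in L^∞(0,1). -/
def MemLinf (g : ℝ → ℝ) : Prop :=
  Measurable g ∧ ∃ M : ℝ, ∀ᵐ x ∂(volume.restrict (Set.Ioo (0:ℝ) 1)), |g x| ≤ M

/-- `g` is absolutely continuous on [0,1] with derivative `g' ∈ L¹(0,1)`. -/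
def HasL1Deriv (g g' : ℝ → ℝ) : Prop :=
  Measurable g' ∧ IntervalIntegrable g' volume 0 1 ∧
    ∀ x ∈ Set.Icc (0:ℝ) 1, g x = g 0 + ∫ t in (0:ℝ)..x, g' t

/-- A function in H¹(0,1): absolutely continuous on [0,1], carried together with its
(a.e.) derivative, which lies in L²(0,1). -/
structure H1 where
  val : ℝ → ℝ
  dval : ℝ → ℝ
  dval_meas : Measurable dval
  dval_int : IntervalIntegrable dval volume 0 1
  dval_sq_int : IntervalIntegrable (fun t => (dval t)^2) volume 0 1
  ftc : ∀ x ∈ Set.Icc (0:ℝ) 1, val x = val 0 + ∫ t in (0:ℝ)..x, dval t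

/-- `u ∈ H²(0,1)`: the derivative `u'` is absolutely continuous with `u'' ∈ L²(0,1)`. -/
def H1.IsH2 (u : H1) : Prop :=
  ∃ u'' : ℝ → ℝ, Measurable u'' ∧ IntervalIntegrable u'' volume 0 1 ∧
    IntervalIntegrable (fun t => (u'' t)^2) volume 0 1 ∧
    ∀ x ∈ Set.Icc (0:ℝ) 1, u.dval x = u.dval 0 + ∫ t in (0:ℝ)..x, u'' t

/-- The coefficients of the elliptic problem on Ω = (0,1):
`a, b ∈ W^{1,∞}(Ω)`, `c ∈ L^∞(Ω)`, `a ≥ a₀ > 0`, and `c − b'/2 ≥ 0` a.e. -/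
structure Coeffs where
  a : ℝ → ℝ
  b : ℝ → ℝ
  c : ℝ → ℝ
  a' : ℝ → ℝ
  b' : ℝ → ℝ
  a0 : ℝ
  a0_pos : 0 < a0
  a_lb : ∀ x ∈ Set.Icc (0:ℝ) 1, a0 ≤ a x
  a'_meas : Measurable a'
  b'_meas : Measurable b'
  c_meas : Measurable c
  a'_int : IntervalIntegrable a' volume 0 1
  b'_int : IntervalIntegrable b' volume 0 1
  a'_bdd : ∃ M : ℝ, ∀ᵐ x ∂(volume.restrict (Set.Ioo (0:ℝ) 1)), |a' x| ≤ M
  b'_bdd : ∃ M : ℝ, ∀ᵐ x ∂(volume.restrict (Set.Ioo (0:ℝ) 1)), |b' x| ≤ M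
  c_bdd : ∃ M : ℝ, ∀ᵐ x ∂(volume.restrict (Set.Ioo (0:ℝ) 1)), |c x| ≤ M
  ftc_a : ∀ x ∈ Set.Icc (0:ℝ) 1, a x = a 0 + ∫ t in (0:ℝ)..x, a' t
  ftc_b : ∀ x ∈ Set.Icc (0:ℝ) 1, b x = b 0 + ∫ t in (0:ℝ)..x, b' t
  cb_nonneg : ∀ᵐ x ∂(volume.restrict (Set.Ioo (0:ℝ) 1)), 0 ≤ c x - b' x / 2

/-- The bilinear form B(u,v) = ∫₀¹ (a u' v' + b u' v + c u v) dx. -/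
def Coeffs.B (P : Coeffs) (u v : H1) : ℝ :=
  ∫ t in (0:ℝ)..1,
    (P.a t * u.dval t * v.dval t + P.b t * u.dval t * v.val t + P.c t * u.val t * v.val t)

/-- The right-hand side functional (f, v) = ∫₀¹ f v dx. -/
def ip (f : ℝ → ℝ) (v : H1) : ℝ := ∫ t in (0:ℝ)..1, f t * v.val t

/-- `u ∈ H¹₀(Ω)` is the weak solution: B(u,v) = (f,v) for all v ∈ H¹₀(Ω). -/
def Coeffs.IsWeakSolution (P : Coeffs) (f : ℝ → ℝ) (u : H1) : Prop :=
  u.val 0 = 0 ∧ u.val 1 = 0 ∧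
    ∀ v : H1, v.val 0 = 0 → v.val 1 = 0 → P.B u v = ip f v

/-- A mesh of N elements of Ω = (0,1): 0 = x₀ < x₁ < ⋯ < x_N = 1. -/
structure Mesh (N : ℕ) where
  x : ℕ → ℝ
  x_zero : x 0 = 0
  x_last : x N = 1
  x_mono : ∀ i < N, x i < x (i+1)

/-- Element length (the element of index `i` is `(x i, x (i+1))`, `0 ≤ i < N`). -/
def Mesh.h {N : ℕ} (m : Mesh N) (i : ℕ) : ℝ := m.x (i+1) - m.x i

/-- `v` is piecewise linear with respect to the mesh: its derivative is constant
inside each element. -/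
def Mesh.IsPL {N : ℕ} (m : Mesh N) (v : H1) : Prop :=
  ∀ i < N, ∃ s : ℝ, ∀ t ∈ Set.Ioo (m.x i) (m.x (i+1)), v.dval t = s

/-- `uh` is the linear finite element solution on the mesh `m`:
a continuous piecewise linear function vanishing at 0 and 1 with
B(u_h, v_h) = (f, v_h) for all piecewise linear v_h vanishing at 0 and 1. -/
def Coeffs.IsFESolution (P : Coeffs) (f : ℝ → ℝ) {N : ℕ} (m : Mesh N) (uh : H1) : Prop :=
  uh.val 0 = 0 ∧ uh.val 1 = 0 ∧ m.IsPL uh ∧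
    ∀ v : H1, v.val 0 = 0 → v.val 1 = 0 → m.IsPL v → P.B uh v = ip f v

/-- The residual of `w`: r = f + a' w' − b w' − c w. -/
def Coeffs.res (P : Coeffs) (f : ℝ → ℝ) (w : H1) : ℝ → ℝ :=
  fun t => f t + P.a' t * w.dval t - P.b t * w.dval t - P.c t * w.val t

/-- The element L² average ⟨g⟩_i = (h_i⁻¹ ∫_{K_i} g²)^{1/2}. -/
def Mesh.avg {N : ℕ} (m : Mesh N) (g : ℝ → ℝ) (i : ℕ) : ℝ :=
  Real.sqrt ((1 / m.h i) * ∫ t in (m.x i)..(m.x (i+1)), (g t)^2)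

/-- The intensity parameter α_h = (Σ_i h_i ⟨g⟩_i^{2/3})³. -/
def Mesh.alpha {N : ℕ} (m : Mesh N) (g : ℝ → ℝ) : ℝ :=
  (∑ i ∈ Finset.range N, m.h i * (m.avg g i) ^ ((2:ℝ)/3)) ^ 3

/-- The adaptation function value ρ_i = (1 + α_h⁻¹ ⟨g⟩_i²)^{1/3}. -/
def Mesh.rho {N : ℕ} (m : Mesh N) (g : ℝ → ℝ) (i : ℕ) : ℝ :=
  (1 + (m.alpha g)⁻¹ * (m.avg g i)^2) ^ ((1:ℝ)/3)

/-- σ_h = Σ_i ρ_i h_i. -/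
def Mesh.sigma {N : ℕ} (m : Mesh N) (g : ℝ → ℝ) : ℝ :=
  ∑ i ∈ Finset.range N, m.rho g i * m.h i

/-- The mesh equidistributes (the piecewise constant adaptation function built from) `g`:
ρ_i h_i = σ_h / N for all elements. -/
def Mesh.IsEquidistributing {N : ℕ} (m : Mesh N) (g : ℝ → ℝ) : Prop :=
  ∀ i < N, m.rho g i * m.h i = m.sigma g / (N:ℝ)

/-- Membership in the mesh set S_N: 1/(ρ₀ N) ≤ h_i ≤ 2/N for all i. -/
def Mesh.InS {N : ℕ} (m : Mesh N) (ρ0 : ℝ) : Prop :=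
  ∀ i < N, 1 / (ρ0 * (N:ℝ)) ≤ m.h i ∧ m.h i ≤ 2 / (N:ℝ)

/-- The maximum norm distance ‖X − X̃‖_∞ between two meshes with the same N. -/
def meshDist {N : ℕ} (m m' : Mesh N) : ℝ :=
  (Finset.range (N+1)).sup' (Finset.nonempty_range_iff.mpr (Nat.succ_ne_zero N))
    (fun i => |m.x i - m'.x i|)

/-- The energy norm squared ‖v‖_E² = ∫₀¹ (a v'² + (c − b'/2) v²) dx. -/
def Coeffs.energySq (P : Coeffs) (v : H1) : ℝ :=
  ∫ t in (0:ℝ)..1, (P.a t * (v.dval t)^2 + (P.c t - P.b' t / 2) * (v.val t)^2)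

/-!
Fix `ε > 0` small and let a point `y` of the standard simplex describe the mesh with element
lengths `h_i = ε + (1 - N ε) y_i`. The finite element solution depends continuously on `y`, and
so does `ρ_i h_i`. By the Knaster–Kuratowski–Mazurkiewicz lemma some `y` makes all `ρ_i h_i` equal
to their average `σ_h / N`, provided that `ρ_i h_i ≤ σ_h / N` on the face `y_i = 0`. As
`σ_h ≥ 1`, there it is enough that `ρ_i h_i ≤ 1 / N` whenever `h_i = ε`. Now
`(ρ_i h_i)³ = h_i³ + h_i² α_h⁻¹ ∫_{K_i} r_h²`, and Hölder's inequality gives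
`‖r_h‖_{L¹}⁴ ≤ α_h ‖r_h‖_{L²}²`, so `ρ_i h_i` is small with `h_i` once `‖r_h‖_{L¹}` is bounded below
and `‖r_h‖_{L²}` above, uniformly in the mesh. Both bounds come from the stability of the finite
element method: the `L¹` norm of `r_h` controls that of `f`, and the `L²` norm of `f` that of `r_h`.
If `f = 0` a.e., the residual vanishes and the uniform mesh is equidistributing.
-/

section Scarf

open Finset

variable {I X α : Type*} [LinearOrder α] {r : I → X → α} {σ : Finset X} {μ : I → X} {i j k : I}
  {e : I → X} {c : X → I} {x y z p : X}

/-- Scarf's notion of a dominant set for the orders induced by the maps `r i`: no point exceeds,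
in every order, the smallest element of `σ`. -/
def Dominant (r : I → X → α) (σ : Finset X) : Prop :=
  ∀ y, ∃ i, ∀ x ∈ σ, r i y ≤ r i x

lemma Dominant.mono {τ : Finset X} (hτ : Dominant r τ) (h : σ ⊆ τ) : Dominant r σ := fun y =>
  let ⟨i, hi⟩ := hτ y
  ⟨i, fun x hx => hi x (h hx)⟩

/-- The points lying above `μ l` in every order `l` other than `k`. When `μ` selects the minima of
a dominant set, these are the candidates for replacing its minimum in the order `k`. -/
def AboveMins (r : I → X → α) (μ : I → X) (k : I) (y : X) : Prop :=
  ∀ l, l ≠ k → r l (μ l) < r l y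

/-- `μ` selects the minimum of `σ` in each order, every element of `σ` is a minimum, and the
minima in the orders `i` and `j` coincide. A dominant set with one element less than there are
orders carries such a selection. -/
structure MinSelection (r : I → X → α) (σ : Finset X) (μ : I → X) (i j : I) : Prop where
  ne : i ≠ j
  eq : μ i = μ j
  mem : ∀ l, μ l ∈ σ
  min : ∀ l, ∀ x ∈ σ, r l (μ l) ≤ r l x
  surj : ∀ x ∈ σ, ∃ l, μ l = x

namespace MinSelection

lemma symm (h : MinSelection r σ μ i j) : MinSelection r σ μ j i :=
  ⟨h.ne.symm, h.eq.symm, h.mem, h.min, h.surj⟩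

lemma not_aboveMins (h : MinSelection r σ μ i j) (hσ : Dominant r σ) (hy : AboveMins r μ i y) :
    ¬ AboveMins r μ j y := by
  intro hy'
  obtain ⟨l, hl⟩ := hσ y
  by_cases hli : l = i
  · exact (hl _ (h.mem l)).not_gt (hy' l (hli ▸ h.ne))
  · exact (hl _ (h.mem l)).not_gt (hy l hli)

lemma notMem_of_aboveMins (h : MinSelection r σ μ i j) (hy : AboveMins r μ i y) : y ∉ σ := by
  intro hyσ
  obtain ⟨l, rfl⟩ := h.surj y hyσ
  by_cases hli : l = i
  · subst hli
    exact (h.eq ▸ hy j h.ne.symm).false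
  · exact (hy l hli).false

section Insert

variable [DecidableEq X]

lemma le_of_dominant_insert (h : MinSelection r σ μ i j) (hy : Dominant r (insert y σ))
    (hz : AboveMins r μ k z) : r k z ≤ r k y := by
  obtain ⟨l, hl⟩ := hy z
  by_cases hlk : l = k
  · exact hlk ▸ hl y (mem_insert_self _ _)
  · exact absurd (hl _ (mem_insert_of_mem (h.mem l))) (hz l hlk).not_ge

lemma dominant_insert (h : MinSelection r σ μ i j) (hσ : Dominant r σ) (hy : AboveMins r μ i y)
    (hmax : ∀ z, AboveMins r μ i z → r i z ≤ r i y) : Dominant r (insert y σ) := by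
  intro z
  have of_le_min : ∀ l, l ≠ i → r l z ≤ r l (μ l) → ∃ i, ∀ x ∈ insert y σ, r i z ≤ r i x :=
    fun l hl hz => ⟨l, forall_mem_insert _ _ _ |>.2
      ⟨hz.trans (hy l hl).le, fun x hx => hz.trans (h.min l x hx)⟩⟩
  obtain ⟨l, hl⟩ := hσ z
  by_cases hli : l = i
  · subst hli
    by_cases hz : AboveMins r μ l z
    · exact ⟨l, forall_mem_insert _ _ _ |>.2 ⟨hmax z hz, hl⟩⟩
    · simp only [AboveMins, not_forall, not_lt] at hz
      obtain ⟨l', hl', hz'⟩ := hz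
      exact of_le_min l' hl' hz'
  · exact of_le_min l hli (hl _ (h.mem l))

lemma exists_unique_dominant_insert [Finite X] (hr : ∀ i, Function.Injective (r i))
    (h : MinSelection r σ μ i j) (hσ : Dominant r σ) (hne : ∃ y, AboveMins r μ i y) :
    ∃ y, AboveMins r μ i y ∧ Dominant r (insert y σ) ∧
      ∀ z, AboveMins r μ i z → Dominant r (insert z σ) → z = y := by
  classical
  have := Fintype.ofFinite X
  obtain ⟨y, hy, hmax⟩ := ({y | AboveMins r μ i y} : Finset X).exists_max_image (r i)
    (by simpa [Finset.Nonempty] using hne)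
  simp only [mem_filter, mem_univ, true_and] at hy hmax
  have hd := h.dominant_insert hσ hy hmax
  exact ⟨y, hy, hd, fun z hz hdz =>
    hr i (le_antisymm (h.le_of_dominant_insert hd hz) (h.le_of_dominant_insert hdz hy))⟩

/-- In a dominant set as large as the set of orders, each element is the minimum in exactly one
order; removing `y`, the order in which `y` was minimal is one of the two that share a minimum. -/
lemma aboveMins_of_dominant_insert [Fintype I] (hr : ∀ i, Function.Injective (r i))
    (h : MinSelection r σ μ i j) (hc : #σ + 1 = Fintype.card I) (hy : y ∉ σ)
    (hd : Dominant r (insert y σ)) : AboveMins r μ i y ∨ AboveMins r μ j y := by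
  classical
  obtain ⟨k, hk⟩ := hd y
  choose g hg using hd
  have hgk : ∀ x ∈ σ, g x ≠ k := fun x hx hxk => hy <| hr k (le_antisymm
    (hxk ▸ hg x y (mem_insert_self _ _)) (hk x (mem_insert_of_mem hx))) ▸ hx
  have hμg : ∀ x ∈ σ, μ (g x) = x := fun x hx =>
    hr _ (le_antisymm (h.min _ x hx) (hg x _ (mem_insert_of_mem (h.mem _))))
  have hg_image : σ.image g = univ.erase k := by
    have hg_inj : Set.InjOn g σ := fun x hx x' hx' hxx' => by rw [← hμg x hx, ← hμg x' hx', hxx']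
    refine eq_of_subset_of_card_le
      (image_subset_iff.2 fun x hx => mem_erase.2 ⟨hgk x hx, mem_univ _⟩) ?_
    rw [card_image_of_injOn hg_inj, card_erase_of_mem (mem_univ _), card_univ]
    omega
  have hg_surj : ∀ l, l ≠ k → g (μ l) = l := by
    intro l hl
    obtain ⟨x, hx, rfl⟩ := mem_image.1 (hg_image ▸ mem_erase.2 ⟨hl, mem_univ _⟩ : l ∈ σ.image g)
    rw [hμg x hx]
  have habove : AboveMins r μ k y := by
    intro l hl
    have hle := hg (μ l) y (mem_insert_self _ _)
    rw [hg_surj l hl] at hle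
    exact hle.lt_of_ne fun heq => hy (hr l heq ▸ h.mem l)
  by_cases hki : k = i
  · exact .inl (hki ▸ habove)
  by_cases hkj : k = j
  · exact .inr (hkj ▸ habove)
  exact absurd (by rw [← hg_surj i (Ne.symm hki), ← hg_surj j (Ne.symm hkj), h.eq]) h.ne

end Insert

end MinSelection

lemma exists_minSelection [Fintype I] (hr : ∀ i, Function.Injective (r i)) (hσ : Dominant r σ)
    (hne : σ.Nonempty) (hc : #σ + 1 = Fintype.card I) : ∃ μ i j, MinSelection r σ μ i j := by
  choose μ hμ hmin using fun l => σ.exists_min_image (r l) hne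
  obtain ⟨i, -, j, -, hij, he⟩ := exists_ne_map_eq_of_card_lt_of_maps_to
    (s := (univ : Finset I)) (t := σ) (by rw [card_univ]; omega) (f := μ) (fun l _ => hμ l)
  refine ⟨μ, i, j, hij, he, hμ, hmin, fun x hx => ?_⟩
  obtain ⟨l, hl⟩ := hσ x
  exact ⟨l, hr l (le_antisymm (hmin l x hx) (hl _ (hμ l)))⟩

/-- A family of extreme points: `e i` is the least point in the order `i`, and lies above all the
non-extreme points in the remaining orders. -/
structure IsExtreme (r : I → X → α) (e : I → X) : Prop where
  least : ∀ i y, y ≠ e i → r i (e i) < r i y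
  above : ∀ i j y, i ≠ j → y ∉ Set.range e → r i y < r i (e j)

lemma IsExtreme.injective (he : IsExtreme r e) (hp : p ∉ Set.range e) :
    Function.Injective e := by
  intro i j hij
  by_contra hne
  exact (he.least i p fun h => hp ⟨i, h.symm⟩).not_gt (hij ▸ he.above i j p hne hp)

section Extensions

variable [Fintype X] [DecidableEq X]

open Classical in
/-- The points whose adjunction to `σ` yields a larger dominant set. -/
def extensions (r : I → X → α) (σ : Finset X) : Finset X :=
  {y | y ∉ σ ∧ Dominant r (insert y σ)}

lemma mem_extensions : y ∈ extensions r σ ↔ y ∉ σ ∧ Dominant r (insert y σ) := by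
  simp [extensions]

variable [Fintype I]

lemma MinSelection.card_extensions_eq_two (hr : ∀ i, Function.Injective (r i))
    (hc : #σ + 1 = Fintype.card I) (h : MinSelection r σ μ i j) (hσ : Dominant r σ)
    (hi : ∃ y, AboveMins r μ i y) (hj : ∃ y, AboveMins r μ j y) : #(extensions r σ) = 2 := by
  obtain ⟨y, hy, hyd, hyu⟩ := h.exists_unique_dominant_insert hr hσ hi
  obtain ⟨z, hz, hzd, hzu⟩ := h.symm.exists_unique_dominant_insert hr hσ hj
  refine card_eq_two.2 ⟨y, z, fun hyz => h.not_aboveMins hσ hy (hyz ▸ hz), ?_⟩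
  ext w
  rw [mem_extensions, mem_insert, mem_singleton]
  constructor
  · rintro ⟨hw, hwd⟩
    exact (h.aboveMins_of_dominant_insert hr hc hw hwd).imp (hyu w · hwd) (hzu w · hwd)
  · rintro (rfl | rfl)
    exacts [⟨h.notMem_of_aboveMins hy, hyd⟩, ⟨h.symm.notMem_of_aboveMins hz, hzd⟩]

lemma MinSelection.card_extensions_eq_one (hr : ∀ i, Function.Injective (r i))
    (hc : #σ + 1 = Fintype.card I) (h : MinSelection r σ μ i j) (hσ : Dominant r σ)
    (hi : ∃ y, AboveMins r μ i y) (hj : ∀ y, ¬ AboveMins r μ j y) : #(extensions r σ) = 1 := by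
  obtain ⟨y, hy, hyd, hyu⟩ := h.exists_unique_dominant_insert hr hσ hi
  refine card_eq_one.2 ⟨y, ?_⟩
  ext w
  rw [mem_extensions, mem_singleton]
  constructor
  · rintro ⟨hw, hwd⟩
    exact (h.aboveMins_of_dominant_insert hr hc hw hwd).elim (hyu w · hwd) (absurd · (hj w))
  · rintro rfl
    exact ⟨h.notMem_of_aboveMins hy, hyd⟩

lemma IsExtreme.card_extensions_eq_two (hr : ∀ i, Function.Injective (r i))
    (he : IsExtreme r e) (hc : #σ + 1 = Fintype.card I) (hσ : Dominant r σ)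
    (hx : x ∈ σ) (hxe : x ∉ Set.range e) : #(extensions r σ) = 2 := by
  obtain ⟨μ, i, j, h⟩ := exists_minSelection hr hσ ⟨x, hx⟩ hc
  have habove (i : I) : AboveMins r μ i (e i) := fun l hl =>
    (h.min l x hx).trans_lt (he.above l i x hl hxe)
  exact h.card_extensions_eq_two hr hc hσ ⟨_, habove i⟩ ⟨_, habove j⟩

end Extensions

section Faces

variable [Fintype I] [DecidableEq I] [DecidableEq X]

lemma IsExtreme.dominant_image_erase (he : IsExtreme r e) (i₀ : I) :
    Dominant r ((univ.erase i₀).image e) := by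
  intro y
  by_cases hy : y ∈ Set.range e
  · obtain ⟨l, rfl⟩ := hy
    refine ⟨l, fun x _ => ?_⟩
    by_cases hx : x = e l
    · exact hx ▸ le_rfl
    · exact (he.least l x hx).le
  · refine ⟨i₀, fun x hx => ?_⟩
    obtain ⟨l, hl, rfl⟩ := mem_image.1 hx
    exact (he.above i₀ l y (ne_of_mem_erase hl).symm hy).le

lemma card_image_univ_erase_add_one (he : Function.Injective e) (i₀ : I) :
    #((univ.erase i₀).image e) + 1 = Fintype.card I := by
  rw [card_image_of_injective _ he, card_erase_add_one (mem_univ _), card_univ]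

variable [Fintype X]

/-- On the face opposite to `e i₀`, the only point that can replace the minimum which the order
`i₀` shares with some order `j` is one above all the remaining minima, never one below. -/
lemma IsExtreme.card_extensions_image_erase (hr : ∀ i, Function.Injective (r i))
    (he : IsExtreme r e) (hp : p ∉ Set.range e) (i₀ : I) (hn : 2 ≤ Fintype.card I) :
    #(extensions r ((univ.erase i₀).image e)) = 1 := by
  set σ := (univ.erase i₀).image e with hσ_def
  have hinj := he.injective hp
  have hc : #σ + 1 = Fintype.card I := card_image_univ_erase_add_one hinj i₀
  have hσ : Dominant r σ := he.dominant_image_erase i₀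
  obtain ⟨μ, i, j, h⟩ := exists_minSelection hr hσ (card_pos.1 (by omega)) hc
  have hμ : ∀ l, l ≠ i₀ → μ l = e l := by
    intro l hl
    by_contra hne
    exact (h.min l _ (mem_image_of_mem _ (mem_erase.2 ⟨hl, mem_univ _⟩))).not_gt
      (he.least l _ hne)
  have of_left_eq {j : I} (h : MinSelection r σ μ i₀ j) : #(extensions r σ) = 1 := by
    have hj : j ≠ i₀ := h.ne.symm
    refine h.card_extensions_eq_one hr hc hσ ⟨p, fun l hl => ?_⟩ fun y hy => ?_
    · exact hμ l hl ▸ he.least l p fun h => hp ⟨l, h.symm⟩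
    have hyj : r i₀ (e j) < r i₀ y := by simpa only [h.eq, hμ j hj] using hy i₀ h.ne
    by_cases hye : y ∈ Set.range e
    · obtain ⟨l, rfl⟩ := hye
      have hl : l = i₀ ∨ l = j := by
        by_contra! hl
        exact (hμ l hl.1 ▸ hy l hl.2).false
      rcases hl with rfl | rfl
      · exact hyj.not_gt (he.least l _ (hinj.ne hj))
      · exact hyj.false
    · exact hyj.not_gt (he.above i₀ j y h.ne hye)
  by_cases hi : i = i₀
  · subst hi; exact of_left_eq h
  by_cases hj : j = i₀
  · subst hj; exact of_left_eq h.symm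
  exact absurd (hinj (by rw [← hμ i hi, ← hμ j hj, h.eq])) h.ne

end Faces

lemma image_erase_eq_image [DecidableEq I] [DecidableEq X] {τ : Finset X} (hy : y ∈ τ)
    (hxy : x ≠ y) (hc : c x = c y) : (τ.erase x).image c = τ.image c := by
  refine (image_subset_image (erase_subset _ _)).antisymm fun l hl => ?_
  obtain ⟨z, hz, rfl⟩ := mem_image.1 hl
  by_cases hzx : z = x
  · rw [hzx, hc]
    exact mem_image_of_mem c (mem_erase.2 ⟨hxy.symm, hy⟩)
  · exact mem_image_of_mem c (mem_erase.2 ⟨hzx, hz⟩)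

section Facets

variable [Fintype I] [DecidableEq I] [DecidableEq X]

/-- The facets of `τ` bearing every color except `i₀`, each encoded by the vertex it omits. -/
def coloredFacets (c : X → I) (i₀ : I) (τ : Finset X) : Finset X :=
  {x ∈ τ | (τ.erase x).image c = univ.erase i₀}

lemma mem_coloredFacets {i₀ : I} {τ : Finset X} :
    x ∈ coloredFacets c i₀ τ ↔ x ∈ τ ∧ (τ.erase x).image c = univ.erase i₀ :=
  mem_filter

lemma even_card_coloredFacets (i₀ : I) {τ : Finset X} (hτ : #τ = Fintype.card I)
    (hnot : τ.image c ≠ univ) : Even #(coloredFacets c i₀ τ) := by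
  rcases (coloredFacets c i₀ τ).eq_empty_or_nonempty with hempty | ⟨x, hx⟩
  · simp [hempty]
  have injOn_erase : ∀ z ∈ coloredFacets c i₀ τ, Set.InjOn c (τ.erase z) := by
    intro z hz
    obtain ⟨hzτ, hz⟩ := mem_coloredFacets.1 hz
    rw [← card_image_iff, hz, card_erase_of_mem hzτ, card_erase_of_mem (mem_univ _), hτ, card_univ]
  have hxτ := (mem_coloredFacets.1 hx).1
  have hcx : c x ∈ (τ.erase x).image c := by
    rw [(mem_coloredFacets.1 hx).2]
    refine mem_erase.2 ⟨fun h => hnot ?_, mem_univ _⟩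
    rw [← insert_erase hxτ, image_insert, (mem_coloredFacets.1 hx).2, h, insert_erase (mem_univ _)]
  obtain ⟨x', hx', hcx'⟩ := mem_image.1 hcx
  obtain ⟨hne, hx'τ⟩ := mem_erase.1 hx'
  suffices h : coloredFacets c i₀ τ = {x, x'} by
    rw [h, card_pair hne.symm]; exact even_two
  ext z
  rw [mem_insert, mem_singleton]
  constructor
  · intro hz
    by_contra! hcon
    exact hne (injOn_erase z hz (mem_erase.2 ⟨hcon.2.symm, hx'τ⟩)
      (mem_erase.2 ⟨hcon.1.symm, hxτ⟩) hcx')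
  · rintro (rfl | rfl)
    · exact hx
    · refine mem_coloredFacets.2 ⟨hx'τ, ?_⟩
      rw [image_erase_eq_image hxτ hne hcx', ← image_erase_eq_image hx'τ hne.symm hcx'.symm,
        (mem_coloredFacets.1 hx).2]

end Facets

section Rainbow

variable [Fintype X] [Fintype I]

open Classical in
/-- The dominant sets with as many elements as there are orders: the rooms of Scarf's path-following
argument. -/
def rooms (r : I → X → α) : Finset (Finset X) :=
  {τ | #τ = Fintype.card I ∧ Dominant r τ}

lemma mem_rooms : σ ∈ rooms r ↔ #σ = Fintype.card I ∧ Dominant r σ := by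
  simp [rooms]

variable [DecidableEq I]

open Classical in
/-- The dominant sets bearing each color except `i₀` exactly once: the doors between rooms. -/
def doors (r : I → X → α) (c : X → I) (i₀ : I) : Finset (Finset X) :=
  {σ | #σ + 1 = Fintype.card I ∧ Dominant r σ ∧ σ.image c = univ.erase i₀}

lemma mem_doors {i₀ : I} : σ ∈ doors r c i₀ ↔
    #σ + 1 = Fintype.card I ∧ Dominant r σ ∧ σ.image c = univ.erase i₀ := by
  simp [doors]

variable [DecidableEq X]

lemma sum_card_extensions_eq_sum_card_coloredFacets (r : I → X → α) (c : X → I) (i₀ : I) :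
    ∑ σ ∈ doors r c i₀, #(extensions r σ) = ∑ τ ∈ rooms r, #(coloredFacets c i₀ τ) := by
  rw [← card_sigma, ← card_sigma]
  refine card_nbij' (fun q => ⟨insert q.2 q.1, q.2⟩) (fun q => ⟨q.1.erase q.2, q.2⟩) ?_ ?_ ?_ ?_
  · rintro ⟨σ, y⟩ h
    simp only [coe_sigma, Set.mem_sigma_iff, mem_coe, mem_doors, mem_extensions, mem_rooms,
      mem_coloredFacets] at h ⊢
    obtain ⟨⟨hσc, -, hσi⟩, hy, hd⟩ := h
    exact ⟨⟨by rw [card_insert_of_notMem hy, hσc], hd⟩, mem_insert_self _ _,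
      by rw [erase_insert hy, hσi]⟩
  · rintro ⟨τ, x⟩ h
    simp only [coe_sigma, Set.mem_sigma_iff, mem_coe, mem_doors, mem_extensions, mem_rooms,
      mem_coloredFacets] at h ⊢
    obtain ⟨⟨hτc, hd⟩, hx, hτi⟩ := h
    exact ⟨⟨by rw [card_erase_add_one hx, hτc], hd.mono (erase_subset _ _), hτi⟩,
      notMem_erase _ _, by rwa [insert_erase hx]⟩
  · rintro ⟨σ, y⟩ h
    simp only [coe_sigma, Set.mem_sigma_iff, mem_coe, mem_extensions] at h
    simp only [erase_insert h.2.1]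
  · rintro ⟨τ, x⟩ h
    simp only [coe_sigma, Set.mem_sigma_iff, mem_coe, mem_coloredFacets] at h
    simp only [insert_erase h.2.1]

lemma exists_notMem_range_of_mem_doors {i₀ : I} (hinj : Function.Injective e)
    (hce : ∀ i, c (e i) = i) (hσ : σ ∈ doors r c i₀) (hne : σ ≠ (univ.erase i₀).image e) :
    ∃ x ∈ σ, x ∉ Set.range e := by
  obtain ⟨hσc, -, hσi⟩ := mem_doors.1 hσ
  by_contra! hall
  refine hne (eq_of_subset_of_card_le (fun x hx => ?_) ?_)
  · obtain ⟨l, rfl⟩ := hall x hx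
    exact mem_image_of_mem _ (hσi ▸ hce l ▸ mem_image_of_mem c hx)
  · have := card_image_univ_erase_add_one hinj i₀
    omega

end Rainbow

/-- **Scarf's lemma**. Doors other than the extreme one lie on two rooms, the extreme one on a
single room, and a room without all colors has an even number of doors. -/
theorem exists_dominant_rainbow [Finite X] [Fintype I] [DecidableEq I]
    (hr : ∀ i, Function.Injective (r i)) (he : IsExtreme r e) (hp : p ∉ Set.range e)
    (hce : ∀ i, c (e i) = i) (hn : 2 ≤ Fintype.card I) :
    ∃ τ : Finset X, #τ = Fintype.card I ∧ Dominant r τ ∧ τ.image c = univ := by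
  classical
  have := Fintype.ofFinite X
  by_contra! hcon
  have hinj := he.injective hp
  obtain ⟨i₀⟩ : Nonempty I := Fintype.card_pos_iff.1 (by omega)
  have hmem : (univ.erase i₀).image e ∈ doors r c i₀ :=
    mem_doors.2 ⟨card_image_univ_erase_add_one hinj i₀, he.dominant_image_erase i₀,
      by rw [image_image, show c ∘ e = id from funext hce, image_id]⟩
  have hodd : Odd (∑ σ ∈ doors r c i₀, #(extensions r σ)) := by
    rw [← add_sum_erase _ _ hmem, he.card_extensions_image_erase hr hp i₀ hn, add_comm]
    refine (even_sum _ fun σ hσ => ?_).add_one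
    obtain ⟨hσne, hσ⟩ := mem_erase.1 hσ
    obtain ⟨x, hx, hxe⟩ := exists_notMem_range_of_mem_doors hinj hce hσ hσne
    rw [he.card_extensions_eq_two hr (mem_doors.1 hσ).1 (mem_doors.1 hσ).2.1 hx hxe]
    exact even_two
  have heven : Even (∑ τ ∈ rooms r, #(coloredFacets c i₀ τ)) := even_sum _ fun τ hτ =>
    even_card_coloredFacets i₀ (mem_rooms.1 hτ).1 (hcon τ (mem_rooms.1 hτ).1 (mem_rooms.1 hτ).2)
  rw [← sum_card_extensions_eq_sum_card_coloredFacets] at heven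
  exact Nat.not_even_iff_odd.2 hodd heven

end Scarf

section KKM

open Filter Topology

variable {I : Type*} [Fintype I]

lemma le_add_card_of_lt_sum {k : ℕ} {m p : I → ℕ} (hm : k < ∑ i, m i) (hp : ∑ i, p i = k)
    (hle : ∀ i, m i ≤ p i + 1) (j : I) : p j + 2 ≤ m j + Fintype.card I := by
  classical
  have hsum : ∑ i, (p i + 1) = k + Fintype.card I := by
    rw [Finset.sum_add_distrib, hp]; simp
  have hp_split := Finset.add_sum_erase Finset.univ (fun i => p i + 1) (Finset.mem_univ j)
  have hm_split := Finset.add_sum_erase Finset.univ m (Finset.mem_univ j)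
  have hrest : ∑ i ∈ Finset.univ.erase j, m i ≤ ∑ i ∈ Finset.univ.erase j, (p i + 1) :=
    Finset.sum_le_sum fun i _ => hle i
  omega

section Grid

variable [DecidableEq I] {k : ℕ}

/-- The integer points of the simplex dilated by `k`, together with one extreme point for each
vertex, as required by Scarf's lemma. -/
abbrev GridPoint (I : Type*) [Fintype I] [DecidableEq I] (k : ℕ) : Type _ :=
  (Finset.univ : Finset I).piAntidiag k ⊕ I

/-- The `i`-th coordinate of a grid point, shifted by one and extended to the extreme points so
that the `i`-th of them comes first and the other ones come last. -/
def gridCoord (i : I) : GridPoint I k → ℕ :=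
  Sum.elim (fun x => x.1 i + 1) (fun j => if j = i then 0 else k + 2)

/-- The order of the grid points by their `i`-th coordinate, with ties broken arbitrarily. -/
def gridOrder (i : I) (x : GridPoint I k) : ℕ ×ₗ Fin (Fintype.card (GridPoint I k)) :=
  toLex (gridCoord i x, Fintype.equivFin _ x)

lemma gridOrder_injective (i : I) : Function.Injective (gridOrder (k := k) i) := fun _ _ h =>
  (Fintype.equivFin _).injective (congrArg (fun q => (ofLex q).2) h)

lemma gridOrder_lt {i : I} {x y : GridPoint I k} (h : gridCoord i x < gridCoord i y) :
    gridOrder i x < gridOrder i y :=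
  Prod.Lex.toLex_lt_toLex.2 (.inl h)

lemma gridCoord_le {i : I} {x y : GridPoint I k} (h : gridOrder i x ≤ gridOrder i y) :
    gridCoord i x ≤ gridCoord i y :=
  not_lt.1 fun hlt => (gridOrder_lt hlt).not_ge h

lemma sum_gridPoint (p : (Finset.univ : Finset I).piAntidiag k) : ∑ i, p.1 i = k :=
  (Finset.mem_piAntidiag.1 p.2).1

lemma isExtreme_inr : IsExtreme (gridOrder (I := I) (k := k)) Sum.inr where
  least i y hy := by
    refine gridOrder_lt ?_
    rcases y with p | j
    · simp [gridCoord]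
    · have : j ≠ i := fun h => hy (h ▸ rfl)
      simp [gridCoord, this]
  above i j y hij hy := by
    refine gridOrder_lt ?_
    rcases y with p | l
    · have hle : p.1 i ≤ ∑ i, p.1 i :=
        Finset.single_le_sum (fun _ _ => Nat.zero_le _) (Finset.mem_univ i)
      rw [sum_gridPoint] at hle
      simp only [gridCoord, Sum.elim_inl, Sum.elim_inr, if_neg hij.symm]
      omega
    · exact absurd ⟨l, rfl⟩ hy

/-- Otherwise some grid point would exceed `z i` in every order `i`. -/
lemma lt_sum_gridCoord [Nonempty I] {τ : Finset (GridPoint I k)}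
    (hτ : Dominant gridOrder τ) {z : I → GridPoint I k} (hz : ∀ i, z i ∈ τ) :
    k < ∑ i, gridCoord i (z i) := by
  by_contra! hle
  obtain ⟨i₀⟩ := ‹Nonempty I›
  let y : I → ℕ := fun i =>
    gridCoord i (z i) + if i = i₀ then k - ∑ i, gridCoord i (z i) else 0
  have hy : ∑ i, y i = k := by
    simp only [y, Finset.sum_add_distrib, Finset.sum_ite_eq', Finset.mem_univ, if_true]
    omega
  obtain ⟨i, hi⟩ := hτ (.inl ⟨y, Finset.mem_piAntidiag.2 ⟨hy, fun i _ => Finset.mem_univ i⟩⟩)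
  have hlt : y i + 1 ≤ gridCoord i (z i) := gridCoord_le (hi _ (hz i))
  simp only [y] at hlt
  omega

end Grid

/-- A discrete Knaster–Kuratowski–Mazurkiewicz lemma. -/
lemma exists_near_all_labels [Nonempty I] (k : ℕ) (label : (I → ℕ) → I) :
    ∃ q : I → ℕ, ∑ i, q i = k ∧ ∀ i, q i ≤ Fintype.card I ∨
      ∃ p : I → ℕ, ∑ i, p i = k ∧ label p = i ∧
        ∀ j, p j ≤ q j + Fintype.card I ∧ q j ≤ p j + Fintype.card I := by
  classical
  obtain ⟨i₀⟩ := ‹Nonempty I›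
  have hvertex : ∑ i, (Pi.single i₀ k : I → ℕ) i = k := by simp
  by_cases hn : Fintype.card I < 2
  · have : Subsingleton I := Fintype.card_le_one_iff_subsingleton.1 (by omega)
    exact ⟨_, hvertex, fun i => .inr ⟨_, hvertex, Subsingleton.elim _ _, fun j => by omega⟩⟩
  let color : GridPoint I k → I := Sum.elim (fun p => label p.1) id
  have hvertex_notMem : (.inl ⟨Pi.single i₀ k, Finset.mem_piAntidiag.2
      ⟨hvertex, fun i _ => Finset.mem_univ i⟩⟩ : GridPoint I k) ∉ Set.range Sum.inr := by simp
  obtain ⟨τ, hτc, hτd, hτi⟩ := exists_dominant_rainbow (c := color) gridOrder_injective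
    isExtreme_inr hvertex_notMem (fun i => rfl) (by omega)
  choose z hzτ hz using fun i =>
    τ.exists_min_image (gridCoord i) (Finset.card_pos.1 (by omega))
  have hsum : k < ∑ i, gridCoord i (z i) := lt_sum_gridCoord hτd hzτ
  have hbound {p : (Finset.univ : Finset I).piAntidiag k} (hp : .inl p ∈ τ) (j : I) :
      gridCoord j (z j) ≤ p.1 j + 1 ∧ p.1 j + 2 ≤ gridCoord j (z j) + Fintype.card I :=
    ⟨hz j (.inl p) hp,
      le_add_card_of_lt_sum hsum (sum_gridPoint p) (fun i => hz i (.inl p) hp) j⟩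
  have hcolor (i : I) : ∃ x ∈ τ, color x = i := by
    simpa only [Finset.mem_image] using (hτi ▸ Finset.mem_univ i : i ∈ τ.image color)
  have zero_of_inr {i : I} (hi : .inr i ∈ τ) : gridCoord i (z i) = 0 :=
    Nat.le_zero.1 ((hz i _ hi).trans_eq (by simp [gridCoord]))
  obtain ⟨q, hq⟩ : ∃ q, .inl q ∈ τ := by
    by_contra! hno
    refine hsum.not_ge ((Finset.sum_eq_zero fun i _ => ?_).trans_le (Nat.zero_le k))
    obtain ⟨p | j, hx, rfl⟩ := hcolor i
    exacts [absurd hx (hno p), zero_of_inr hx]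
  refine ⟨q.1, sum_gridPoint q, fun i => ?_⟩
  obtain ⟨p | j, hx, rfl⟩ := hcolor i
  · refine .inr ⟨p.1, sum_gridPoint p, rfl, fun j => ?_⟩
    have := hbound hx j
    have := hbound hq j
    omega
  · have := zero_of_inr hx
    have := hbound hq j
    exact .inl (by simp only [color, Sum.elim_inr, id_eq]; omega)

lemma div_mem_stdSimplex {k : ℕ} {p : I → ℕ} (hk : 0 < k) (hp : ∑ i, p i = k) :
    (fun i => (p i : ℝ) / k) ∈ stdSimplex ℝ I := by
  refine ⟨fun i => by positivity, ?_⟩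
  rw [← Finset.sum_div, ← Nat.cast_sum, hp, div_self (by positivity)]

lemma exists_near_all_of_cover [Nonempty I] {F : I → Set (stdSimplex ℝ I)}
    (hcov : ∀ x, ∃ i, x ∈ F i) {k : ℕ} (hk : 0 < k) :
    ∃ q : stdSimplex ℝ I, ∀ i, q.1 i ≤ Fintype.card I / k ∨
      ∃ p ∈ F i, dist q p ≤ Fintype.card I / k := by
  classical
  choose L hL using hcov
  obtain ⟨q, hq, hqi⟩ := exists_near_all_labels k fun p =>
    if hp : ∑ i, p i = k then L ⟨_, div_mem_stdSimplex hk hp⟩ else Classical.arbitrary I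
  refine ⟨⟨_, div_mem_stdSimplex hk hq⟩, fun i => (hqi i).imp (fun h => ?_) ?_⟩
  · exact div_le_div_of_nonneg_right (by exact_mod_cast h) (by positivity)
  · rintro ⟨p, hp, hpi, hpq⟩
    rw [dif_pos hp] at hpi
    refine ⟨_, hpi ▸ hL _, (dist_pi_le_iff (by positivity)).2 fun j => ?_⟩
    have hpj : (p j : ℝ) ≤ q j + Fintype.card I := by exact_mod_cast (hpq j).1
    have hqj : (q j : ℝ) ≤ p j + Fintype.card I := by exact_mod_cast (hpq j).2
    rw [Real.dist_eq, ← sub_div, abs_div, Nat.abs_cast]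
    exact div_le_div_of_nonneg_right (abs_le.2 ⟨by linarith, by linarith⟩) (by positivity)

/-- The **Knaster–Kuratowski–Mazurkiewicz lemma**, in the form where `F i` contains the facet
opposite to the `i`-th vertex. -/
theorem exists_mem_of_closed_cover [Nonempty I] {F : I → Set (stdSimplex ℝ I)}
    (hF : ∀ i, IsClosed (F i)) (hcov : ∀ x, ∃ i, x ∈ F i)
    (hface : ∀ (x : stdSimplex ℝ I) i, x.1 i = 0 → x ∈ F i) : ∃ x, ∀ i, x ∈ F i := by
  choose q hq using fun k : ℕ => exists_near_all_of_cover hcov k.succ_pos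
  have : CompactSpace (stdSimplex ℝ I) := isCompact_iff_compactSpace.1 (isCompact_stdSimplex ℝ I)
  obtain ⟨x, φ, hφ, hlim⟩ := CompactSpace.tendsto_subseq q
  refine ⟨x, fun i => ?_⟩
  rcases (x.2.1 i).eq_or_lt with hxi | hxi
  · exact hface x i hxi.symm
  have hsmall : Tendsto (fun k => (Fintype.card I : ℝ) / ((φ k).succ : ℕ)) atTop (𝓝 0) :=
    (tendsto_const_div_atTop_nhds_zero_nat _).comp
      ((tendsto_add_atTop_nat 1).comp hφ.tendsto_atTop)
  have hlim_coord : Tendsto (fun k => (q (φ k)).1 i) atTop (𝓝 (x.1 i)) :=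
    (((continuous_apply i).comp continuous_subtype_val).tendsto x).comp hlim
  rw [← (hF i).closure_eq, Metric.mem_closure_iff]
  intro ε hε
  obtain ⟨k, hk_face, hk_small, hk_dist⟩ :=
    ((hsmall.eventually_lt hlim_coord hxi).and ((hsmall.eventually_lt_const (half_pos hε)).and
      (Metric.tendsto_nhds.1 hlim (ε / 2) (half_pos hε)))).exists
  obtain ⟨p, hp, hpq⟩ := (hq (φ k) i).resolve_left hk_face.not_ge
  refine ⟨p, hp, ?_⟩
  calc dist x p ≤ dist (q (φ k)) x + dist (q (φ k)) p := dist_triangle_left _ _ _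
    _ < ε := by
      have : dist (q (φ k)) x < ε / 2 := hk_dist
      linarith

theorem exists_forall_eq_average [Nonempty I] {g : stdSimplex ℝ I → I → ℝ} (hg : Continuous g)
    (hface : ∀ (y : stdSimplex ℝ I) i, y.1 i = 0 → g y i ≤ (∑ j, g y j) / Fintype.card I) :
    ∃ y, ∀ i, g y i = (∑ j, g y j) / Fintype.card I := by
  have hsum : ∀ y, ∑ _i : I, (∑ j, g y j) / Fintype.card I = ∑ j, g y j := fun y => by
    rw [Finset.sum_const, Finset.card_univ, nsmul_eq_mul, mul_div_cancel₀]
    exact_mod_cast Fintype.card_ne_zero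
  have hg_apply : ∀ i, Continuous fun y => g y i := continuous_pi_iff.1 hg
  obtain ⟨y, hy⟩ := exists_mem_of_closed_cover
    (F := fun i => {y | g y i ≤ (∑ j, g y j) / Fintype.card I})
    (fun i => isClosed_le (hg_apply i)
      ((continuous_finsetSum _ fun j _ => hg_apply j).div_const _))
    (fun y => by simpa using Finset.exists_le_of_sum_le Finset.univ_nonempty (hsum y).ge) hface
  exact ⟨y, fun i => (Finset.sum_eq_sum_iff_of_le fun j _ => hy j).1 (hsum y).symm i
    (Finset.mem_univ i)⟩

end KKM

section UnitInterval

open Set Filter ENNReal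

/-- Lebesgue measure on the unit interval; on `(0, 1]` rather than `(0, 1)`, so that it is the
measure behind the interval integrals in `L1`, `L2` and `Coeffs.B`. -/
abbrev unitMeasure : Measure ℝ := volume.restrict (Ioc 0 1)

instance : IsProbabilityMeasure unitMeasure := ⟨by simp [unitMeasure]⟩

lemma intervalIntegrable_unit_iff {g : ℝ → ℝ} :
    IntervalIntegrable g volume 0 1 ↔ Integrable g unitMeasure :=
  intervalIntegrable_iff_integrableOn_Ioc_of_le zero_le_one

lemma integral_unit (g : ℝ → ℝ) : ∫ t in (0 : ℝ)..1, g t = ∫ t, g t ∂unitMeasure :=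
  intervalIntegral.integral_of_le zero_le_one

lemma MemL2.memLp {g : ℝ → ℝ} (hg : MemL2 g) : MemLp g 2 unitMeasure :=
  (memLp_two_iff_integrable_sq hg.1.aestronglyMeasurable).2 (intervalIntegrable_unit_iff.1 hg.2)

lemma memLp_top_of_continuousOn {g : ℝ → ℝ} (hg : ContinuousOn g (Icc 0 1)) :
    MemLp g ∞ unitMeasure := by
  obtain ⟨M, hM⟩ := isCompact_Icc.exists_bound_of_continuousOn hg
  refine memLp_top_of_bound
    ((hg.mono Ioc_subset_Icc_self).aestronglyMeasurable measurableSet_Ioc) M ?_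
  filter_upwards [ae_restrict_mem measurableSet_Ioc] with x hx
  exact hM x (Ioc_subset_Icc_self hx)

lemma memLp_top_of_bound_Ioo {g : ℝ → ℝ} (hg : Measurable g)
    (hM : ∃ M : ℝ, ∀ᵐ x ∂(volume.restrict (Ioo (0 : ℝ) 1)), |g x| ≤ M) :
    MemLp g ∞ unitMeasure := by
  rw [restrict_Ioo_eq_restrict_Ioc] at hM
  exact memLp_top_of_bound hg.aestronglyMeasurable hM.choose hM.choose_spec

variable {g k : ℝ → ℝ}

lemma L2_eq_lpNorm (hg : AEStronglyMeasurable g unitMeasure) : L2 g = lpNorm g 2 unitMeasure := by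
  rw [L2, integral_unit, lpNorm_eq_integral_norm_rpow_toReal two_ne_zero ofNat_ne_top hg,
    Real.sqrt_eq_rpow]
  norm_num

lemma L1_eq_lpNorm (hg : AEStronglyMeasurable g unitMeasure) : L1 g = lpNorm g 1 unitMeasure := by
  simp only [L1, integral_unit, lpNorm_one_eq_integral_norm hg, Real.norm_eq_abs]

lemma L1_nonneg (g : ℝ → ℝ) : 0 ≤ L1 g :=
  intervalIntegral.integral_nonneg zero_le_one fun _ _ => abs_nonneg _

lemma sq_L2 (g : ℝ → ℝ) : L2 g ^ 2 = ∫ t in (0 : ℝ)..1, g t ^ 2 :=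
  Real.sq_sqrt (intervalIntegral.integral_nonneg zero_le_one fun _ _ => sq_nonneg _)

lemma L1_le_L2 (hg : MemLp g 2 unitMeasure) : L1 g ≤ L2 g := by
  rw [L1_eq_lpNorm hg.1, L2_eq_lpNorm hg.1, ← toReal_eLpNorm hg.1, ← toReal_eLpNorm hg.1]
  exact toReal_mono hg.eLpNorm_ne_top
    (eLpNorm_le_eLpNorm_of_exponent_le one_le_two hg.1)

lemma L1_le_add_L1_sub (hg : MemLp g 1 unitMeasure) (hk : MemLp k 1 unitMeasure) :
    L1 g ≤ L1 k + L1 (k - g) := by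
  rw [L1_eq_lpNorm hg.1, L1_eq_lpNorm hk.1, L1_eq_lpNorm (hk.sub hg).1]
  exact lpNorm_le_lpNorm_add_lpNorm_sub hk le_rfl

lemma L1_pos (hg : MemLp g 2 unitMeasure) (h : L2 g ≠ 0) : 0 < L1 g := by
  refine (L1_nonneg g).lt_of_ne' fun h₁ => h ?_
  rw [L1_eq_lpNorm hg.1, lpNorm_eq_zero (hg.mono_exponent one_le_two) one_ne_zero] at h₁
  rwa [L2_eq_lpNorm hg.1, lpNorm_eq_zero hg two_ne_zero]

lemma L2_add_le (hg : MemLp g 2 unitMeasure) (hk : MemLp k 2 unitMeasure) :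
    L2 (g + k) ≤ L2 g + L2 k := by
  rw [L2_eq_lpNorm hg.1, L2_eq_lpNorm hk.1, L2_eq_lpNorm (hg.add hk).1]
  exact lpNorm_add_le hg one_le_two

end UnitInterval

section Primitive

open Set

/-- `F` is absolutely continuous on `[p, q]` with a.e. derivative `f`. -/
structure IsPrimitiveOn (F f : ℝ → ℝ) (p q : ℝ) : Prop where
  integrable : IntervalIntegrable f volume p q
  eq_add_integral : ∀ x ∈ Icc p q, F x = F p + ∫ t in p..x, f t

namespace IsPrimitiveOn

variable {p q p' q' : ℝ} {F f G g : ℝ → ℝ}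

lemma intervalIntegrable_mono (h : IsPrimitiveOn F f p q) (h₁ : p ≤ p') (h₂ : p' ≤ q')
    (h₃ : q' ≤ q) : IntervalIntegrable f volume p' q' := by
  refine h.integrable.mono_set ?_
  rw [uIcc_of_le h₂, uIcc_of_le (h₁.trans (h₂.trans h₃))]
  exact Icc_subset_Icc h₁ h₃

lemma mono (h : IsPrimitiveOn F f p q) (h₁ : p ≤ p') (h₂ : p' ≤ q') (h₃ : q' ≤ q) :
    IsPrimitiveOn F f p' q' where
  integrable := h.intervalIntegrable_mono h₁ h₂ h₃
  eq_add_integral x hx := by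
    rw [h.eq_add_integral x ⟨h₁.trans hx.1, hx.2.trans h₃⟩,
      h.eq_add_integral p' ⟨h₁, h₂.trans h₃⟩, add_assoc,
      intervalIntegral.integral_add_adjacent_intervals
        (h.intervalIntegrable_mono le_rfl h₁ (h₂.trans h₃))
        (h.intervalIntegrable_mono h₁ hx.1 (hx.2.trans h₃))]

lemma integral_eq_sub (h : IsPrimitiveOn F f p q) (hpq : p ≤ q) :
    ∫ t in p..q, f t = F q - F p :=
  eq_sub_of_add_eq' (h.eq_add_integral q (right_mem_Icc.2 hpq)).symm

lemma eq_add_mul_of_eqOn_const (h : IsPrimitiveOn F f p q) {s t : ℝ}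
    (hs : ∀ x ∈ Ioo p q, f x = s) (ht : t ∈ Icc p q) : F t = F p + s * (t - p) := by
  rw [h.eq_add_integral t ht, intervalIntegral.integral_of_le ht.1, integral_Ioc_eq_integral_Ioo,
    setIntegral_congr_fun measurableSet_Ioo fun x hx => hs x ⟨hx.1, hx.2.trans_le ht.2⟩]
  simp [ht.1, mul_comm]

lemma continuousOn (h : IsPrimitiveOn F f p q) (hpq : p ≤ q) : ContinuousOn F (Icc p q) := by
  have hprim := intervalIntegral.continuousOn_primitive_interval' h.integrable left_mem_uIcc
  rw [uIcc_of_le hpq] at hprim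
  exact (continuousOn_const.add hprim).congr h.eq_add_integral

lemma integral_deriv_mul_add (hF : IsPrimitiveOn F f p q) (hG : IsPrimitiveOn G g p q)
    (hpq : p ≤ q) : ∫ t in p..q, (f t * G t + F t * g t) = F q * G q - F p * G p := by
  have hac : ∀ {F f : ℝ → ℝ}, IsPrimitiveOn F f p q →
      AbsolutelyContinuousOnInterval (fun x => F p + ∫ t in p..x, f t) p q := fun hF =>
    (LipschitzWith.const _).lipschitzOnWith.absolutelyContinuousOnInterval.add
      (hF.integrable.absolutelyContinuousOnInterval_intervalIntegral left_mem_uIcc)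
  have key := (hac hF).integral_deriv_mul_eq_sub (hac hG)
  simp only [← hF.eq_add_integral q (right_mem_Icc.2 hpq),
    ← hG.eq_add_integral q (right_mem_Icc.2 hpq), intervalIntegral.integral_same, add_zero] at key
  rw [← key]
  apply intervalIntegral.integral_congr_ae
  filter_upwards [hF.integrable.ae_hasDerivAt_integral, hG.integrable.ae_hasDerivAt_integral]
    with x hFx hGx hx
  have hx' := uIoc_subset_uIcc hx
  rw [((hFx hx' p left_mem_uIcc).const_add (F p)).deriv,
    ((hGx hx' p left_mem_uIcc).const_add (G p)).deriv]
  rw [uIcc_of_le hpq] at hx'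
  rw [← hF.eq_add_integral x hx', ← hG.eq_add_integral x hx']

lemma mul (hF : IsPrimitiveOn F f p q) (hG : IsPrimitiveOn G g p q) (hpq : p ≤ q) :
    IsPrimitiveOn (fun t => F t * G t) (fun t => f t * G t + F t * g t) p q where
  integrable := by
    have hFc := hF.continuousOn hpq
    have hGc := hG.continuousOn hpq
    rw [← uIcc_of_le hpq] at hFc hGc
    exact (hF.integrable.mul_continuousOn hGc).add (hG.integrable.continuousOn_mul hFc)
  eq_add_integral x hx := by
    rw [(hF.mono le_rfl hx.1 hx.2).integral_deriv_mul_add (hG.mono le_rfl hx.1 hx.2) hx.1]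
    ring

end IsPrimitiveOn

end Primitive

section BilinearForm

open Set ENNReal

namespace H1

variable (v : H1)

lemma isPrimitiveOn : IsPrimitiveOn v.val v.dval 0 1 := ⟨v.dval_int, v.ftc⟩

lemma memLp_val : MemLp v.val ∞ unitMeasure :=
  memLp_top_of_continuousOn (v.isPrimitiveOn.continuousOn zero_le_one)

lemma memLp_dval : MemLp v.dval 2 unitMeasure := MemL2.memLp ⟨v.dval_meas, v.dval_sq_int⟩

lemma abs_val_le_L1 (h₀ : v.val 0 = 0) {x : ℝ} (hx : x ∈ Icc (0 : ℝ) 1) :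
    |v.val x| ≤ L1 v.dval := by
  rw [v.ftc x hx, h₀, zero_add]
  calc |∫ t in (0 : ℝ)..x, v.dval t| ≤ ∫ t in (0 : ℝ)..x, |v.dval t| :=
        intervalIntegral.abs_integral_le_integral_abs hx.1
    _ ≤ L1 v.dval := intervalIntegral.integral_mono_interval le_rfl hx.1 hx.2
        (Filter.Eventually.of_forall fun _ => abs_nonneg _) v.dval_int.abs

lemma abs_val_le_L2 (h₀ : v.val 0 = 0) {x : ℝ} (hx : x ∈ Icc (0 : ℝ) 1) :
    |v.val x| ≤ L2 v.dval :=
  (v.abs_val_le_L1 h₀ hx).trans (L1_le_L2 v.memLp_dval)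

end H1

namespace Coeffs

variable (P : Coeffs)

lemma isPrimitiveOn_a : IsPrimitiveOn P.a P.a' 0 1 := ⟨P.a'_int, P.ftc_a⟩

lemma isPrimitiveOn_b : IsPrimitiveOn P.b P.b' 0 1 := ⟨P.b'_int, P.ftc_b⟩

lemma memLp_a : MemLp P.a ∞ unitMeasure :=
  memLp_top_of_continuousOn (P.isPrimitiveOn_a.continuousOn zero_le_one)

lemma memLp_b : MemLp P.b ∞ unitMeasure :=
  memLp_top_of_continuousOn (P.isPrimitiveOn_b.continuousOn zero_le_one)

lemma memLp_c : MemLp P.c ∞ unitMeasure := memLp_top_of_bound_Ioo P.c_meas P.c_bdd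

lemma memLp_a' : MemLp P.a' ∞ unitMeasure := memLp_top_of_bound_Ioo P.a'_meas P.a'_bdd

/-- The integrand of the bilinear form `B`. -/
def integrand (u v : H1) (t : ℝ) : ℝ :=
  P.a t * u.dval t * v.dval t + P.b t * u.dval t * v.val t + P.c t * u.val t * v.val t

lemma B_eq_integral_integrand (u v : H1) : P.B u v = ∫ t, P.integrand u v t ∂unitMeasure :=
  integral_unit _

lemma integrable_integrand (u v : H1) : Integrable (P.integrand u v) unitMeasure :=
  (((u.memLp_dval.mul' (r := 2) P.memLp_a).integrable_mul v.memLp_dval).add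
    ((v.memLp_val.mul' (r := 2) (u.memLp_dval.mul' (r := 2) P.memLp_b)).integrable one_le_two)).add
    ((v.memLp_val.mul' (r := ∞) (u.memLp_val.mul' (r := ∞) P.memLp_c)).integrable le_top)

lemma coercive {v : H1} (h₀ : v.val 0 = 0) (h₁ : v.val 1 = 0) :
    P.a0 * L2 v.dval ^ 2 ≤ P.B v v := by
  have hprim := P.isPrimitiveOn_b.mul (v.isPrimitiveOn.mul v.isPrimitiveOn zero_le_one) zero_le_one
  have hint := intervalIntegrable_unit_iff.1 hprim.integrable
  have hvanish := hprim.integral_eq_sub zero_le_one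
  rw [h₀, h₁, integral_unit] at hvanish
  have hB : P.B v v = ∫ t, (P.integrand v v t - 1 / 2 * (P.b' t * (v.val t * v.val t)
      + P.b t * (v.dval t * v.val t + v.val t * v.dval t))) ∂unitMeasure := by
    rw [integral_sub (P.integrable_integrand v v) (hint.const_mul _), integral_const_mul, hvanish,
      B_eq_integral_integrand]
    ring
  rw [hB, sq_L2, integral_unit, ← integral_const_mul]
  refine integral_mono_ae (v.memLp_dval.integrable_sq.const_mul _)
    ((P.integrable_integrand v v).sub (hint.const_mul _)) ?_
  have hcb := P.cb_nonneg
  rw [restrict_Ioo_eq_restrict_Ioc] at hcb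
  filter_upwards [hcb, ae_restrict_mem measurableSet_Ioc] with x hx hx01
  have ha := P.a_lb x (Ioc_subset_Icc_self hx01)
  simp only [integrand]
  nlinarith [mul_nonneg (sub_nonneg.2 ha) (sq_nonneg (v.dval x)),
    mul_nonneg hx (sq_nonneg (v.val x))]

end Coeffs

end BilinearForm

section Galerkin

open Set ENNReal Matrix

namespace H1

@[ext]
lemma ext {v w : H1} (hval : v.val = w.val) (hdval : v.dval = w.dval) : v = w := by
  cases v; cases w; cases hval; cases hdval; rfl

/-- The `H¹` function vanishing at `0` with derivative `g`. -/
def ofDeriv (g : ℝ → ℝ) (hg : Measurable g) (hg₂ : MemLp g 2 unitMeasure) : H1 where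
  val x := ∫ t in (0 : ℝ)..x, g t
  dval := g
  dval_meas := hg
  dval_int := intervalIntegrable_unit_iff.2 (hg₂.integrable one_le_two)
  dval_sq_int := intervalIntegrable_unit_iff.2 hg₂.integrable_sq
  ftc x _ := by simp

instance : Zero H1 := ⟨0, 0, measurable_zero, by simp [Pi.zero_def], by simp, by simp⟩

instance : Add H1 where
  add v w :=
    { val := v.val + w.val
      dval := v.dval + w.dval
      dval_meas := v.dval_meas.add w.dval_meas
      dval_int := v.dval_int.add w.dval_int
      dval_sq_int := intervalIntegrable_unit_iff.2 (v.memLp_dval.add w.memLp_dval).integrable_sq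
      ftc := fun x hx => by
        simp only [Pi.add_apply]
        rw [v.ftc x hx, w.ftc x hx, intervalIntegral.integral_add
          (v.isPrimitiveOn.intervalIntegrable_mono le_rfl hx.1 hx.2)
          (w.isPrimitiveOn.intervalIntegrable_mono le_rfl hx.1 hx.2)]
        ring }

instance : SMul ℝ H1 where
  smul c v :=
    { val := c • v.val
      dval := c • v.dval
      dval_meas := v.dval_meas.const_smul c
      dval_int := v.dval_int.smul c
      dval_sq_int := intervalIntegrable_unit_iff.2 (v.memLp_dval.const_smul c).integrable_sq
      ftc := fun x hx => by
        simp only [Pi.smul_apply, smul_eq_mul]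
        rw [v.ftc x hx, intervalIntegral.integral_const_mul]
        ring }

instance : AddCommMonoid H1 where
  add_assoc _ _ _ := H1.ext (add_assoc _ _ _) (add_assoc _ _ _)
  zero_add _ := H1.ext (zero_add _) (zero_add _)
  add_zero _ := H1.ext (add_zero _) (add_zero _)
  add_comm _ _ := H1.ext (add_comm _ _) (add_comm _ _)
  nsmul := nsmulRec

instance : Module ℝ H1 where
  one_smul _ := H1.ext (one_smul _ _) (one_smul _ _)
  mul_smul _ _ _ := H1.ext (mul_smul _ _ _) (mul_smul _ _ _)
  smul_zero _ := H1.ext (smul_zero _) (smul_zero _)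
  smul_add _ _ _ := H1.ext (smul_add _ _ _) (smul_add _ _ _)
  add_smul _ _ _ := H1.ext (add_smul _ _ _) (add_smul _ _ _)
  zero_smul _ := H1.ext (zero_smul _ _) (zero_smul _ _)

/-- The underlying function, as a linear map. -/
def valₗ : H1 →ₗ[ℝ] ℝ → ℝ := ⟨⟨val, fun _ _ => rfl⟩, fun _ _ => rfl⟩

/-- The derivative, as a linear map. -/
def dvalₗ : H1 →ₗ[ℝ] ℝ → ℝ := ⟨⟨dval, fun _ _ => rfl⟩, fun _ _ => rfl⟩

variable {ι : Type*} (s : Finset ι) (c : ι → ℝ) (φ : ι → H1)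

lemma val_sum_smul (t : ℝ) : (∑ k ∈ s, c k • φ k).val t = ∑ k ∈ s, c k * (φ k).val t :=
  (congrFun (map_sum valₗ _ s) t).trans (Finset.sum_apply t s _)

lemma dval_sum_smul (t : ℝ) : (∑ k ∈ s, c k • φ k).dval t = ∑ k ∈ s, c k * (φ k).dval t :=
  (congrFun (map_sum dvalₗ _ s) t).trans (Finset.sum_apply t s _)

lemma val_eq_of_dval_ae_eq {v w : H1} (h₀ : v.val 0 = w.val 0)
    (h : v.dval =ᵐ[unitMeasure] w.dval) {x : ℝ} (hx : x ∈ Icc (0 : ℝ) 1) : v.val x = w.val x := by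
  rw [v.ftc x hx, w.ftc x hx, h₀, intervalIntegral.integral_of_le hx.1,
    intervalIntegral.integral_of_le hx.1]
  congr 1
  exact integral_congr_ae (ae_restrict_of_ae_restrict_of_subset (Ioc_subset_Ioc le_rfl hx.2) h)

lemma val_eq_zero_of_L2_dval_eq_zero {v : H1} (h₀ : v.val 0 = 0) (h : L2 v.dval = 0) {x : ℝ}
    (hx : x ∈ Icc (0 : ℝ) 1) : v.val x = 0 :=
  abs_nonpos_iff.1 ((v.abs_val_le_L2 h₀ hx).trans_eq h)

end H1

lemma ip_sum_smul {f : ℝ → ℝ} (hf : MemLp f 1 unitMeasure) {ι : Type*} (s : Finset ι)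
    (c : ι → ℝ) (φ : ι → H1) : ip f (∑ k ∈ s, c k • φ k) = ∑ k ∈ s, c k * ip f (φ k) := by
  simp only [ip, integral_unit, ← integral_const_mul]
  rw [← integral_finsetSum]
  · simp only [H1.val_sum_smul, Finset.mul_sum, mul_left_comm]
  · exact fun k _ => (hf.integrable_mul (φ k).memLp_val).const_mul (c k)

lemma ip_congr (f : ℝ → ℝ) {v w : H1} (h : ∀ x ∈ Icc (0 : ℝ) 1, v.val x = w.val x) :
    ip f v = ip f w :=
  intervalIntegral.integral_congr fun x hx => by
    simp only [h x (by rwa [uIcc_of_le zero_le_one] at hx)]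

namespace Coeffs

variable (P : Coeffs)

variable {ι : Type*}

lemma B_sum_smul_left (s : Finset ι) (c : ι → ℝ) (φ : ι → H1) (v : H1) :
    P.B (∑ k ∈ s, c k • φ k) v = ∑ k ∈ s, c k * P.B (φ k) v := by
  simp only [B_eq_integral_integrand, ← integral_const_mul]
  rw [← integral_finsetSum _ fun k _ => (P.integrable_integrand (φ k) v).const_mul (c k)]
  congr with t
  simp only [integrand, H1.val_sum_smul, H1.dval_sum_smul, Finset.mul_sum, Finset.sum_mul,
    ← Finset.sum_add_distrib]
  exact Finset.sum_congr rfl fun k _ => by ring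

lemma B_sum_smul_right (u : H1) (s : Finset ι) (c : ι → ℝ) (φ : ι → H1) :
    P.B u (∑ k ∈ s, c k • φ k) = ∑ k ∈ s, c k * P.B u (φ k) := by
  simp only [B_eq_integral_integrand, ← integral_const_mul]
  rw [← integral_finsetSum _ fun k _ => (P.integrable_integrand u (φ k)).const_mul (c k)]
  congr with t
  simp only [integrand, H1.val_sum_smul, H1.dval_sum_smul, Finset.mul_sum,
    ← Finset.sum_add_distrib]
  exact Finset.sum_congr rfl fun k _ => by ring

lemma B_congr_right (u : H1) {v w : H1} (hd : v.dval =ᵐ[unitMeasure] w.dval)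
    (hv : ∀ x ∈ Icc (0 : ℝ) 1, v.val x = w.val x) : P.B u v = P.B u w := by
  simp only [B_eq_integral_integrand]
  refine integral_congr_ae ?_
  filter_upwards [hd, ae_restrict_mem measurableSet_Ioc] with x hx hx01
  simp only [integrand, hx, hv x (Ioc_subset_Icc_self hx01)]

variable [Fintype ι] (f : ℝ → ℝ) (φ : ι → H1)

/-- The stiffness matrix of `B` for the trial and test functions `φ`. -/
def stiffness : Matrix ι ι ℝ := .of fun i j => P.B (φ j) (φ i)

variable {φ}

lemma stiffness_mulVec (c : ι → ℝ) :
    P.stiffness φ *ᵥ c = fun i => P.B (∑ k, c k • φ k) (φ i) := by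
  ext i
  simp only [B_sum_smul_left, mulVec, dotProduct, stiffness, of_apply, mul_comm]

variable [DecidableEq ι]

lemma det_stiffness_ne_zero (h₀ : ∀ k, (φ k).val 0 = 0) (h₁ : ∀ k, (φ k).val 1 = 0)
    (hφ : LinearIndependent ℝ fun k => (Icc (0 : ℝ) 1).domRestrict (φ k).val) :
    (P.stiffness φ).det ≠ 0 := by
  intro hdet
  obtain ⟨c, hc, hAc⟩ := exists_mulVec_eq_zero_iff.2 hdet
  set w := ∑ k, c k • φ k with hw
  have hw₀ : w.val 0 = 0 := by simp [hw, H1.val_sum_smul, h₀]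
  have hw₁ : w.val 1 = 0 := by simp [hw, H1.val_sum_smul, h₁]
  have hB : P.B w w = 0 := by
    conv_lhs => rw [hw, B_sum_smul_right, ← hw]
    rw [stiffness_mulVec, ← hw] at hAc
    exact Finset.sum_eq_zero fun k _ => by simp [congrFun hAc k]
  have hL2 : L2 w.dval = 0 := by
    have := P.coercive hw₀ hw₁
    rw [hB] at this
    exact pow_eq_zero_iff two_ne_zero |>.1
      (le_antisymm (nonpos_of_mul_nonpos_right this P.a0_pos) (sq_nonneg _))
  refine hc (funext (Fintype.linearIndependent_iff.1 hφ c (funext fun x => ?_)))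
  simpa [hw, H1.val_sum_smul] using H1.val_eq_zero_of_L2_dval_eq_zero hw₀ hL2 x.2

/-- The Galerkin approximation with right-hand side `f` in the span of `φ`, given by inverting
the stiffness matrix. -/
def galerkin (φ : ι → H1) : H1 := ∑ k, ((P.stiffness φ)⁻¹ *ᵥ fun i => ip f (φ i)) k • φ k

lemma B_galerkin (hφ : (P.stiffness φ).det ≠ 0) (i : ι) :
    P.B (P.galerkin f φ) (φ i) = ip f (φ i) := by
  have hmul := P.stiffness_mulVec (φ := φ) ((P.stiffness φ)⁻¹ *ᵥ fun i => ip f (φ i))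
  rw [mulVec_mulVec, mul_nonsing_inv _ hφ.isUnit, one_mulVec] at hmul
  exact (congrFun hmul i).symm

end Coeffs

end Galerkin

section FiniteElement

open Set ENNReal

/-- The piecewise linear function rising from `0` at `p` to `1` at `q`. -/
def ramp (p q : ℝ) : H1 :=
  H1.ofDeriv ((Ioc p q).indicator fun _ => (q - p)⁻¹)
    (measurable_const.indicator measurableSet_Ioc) ((memLp_const _).indicator measurableSet_Ioc)

lemma ramp_val {p q t : ℝ} (hp : 0 ≤ p) (hpq : p ≤ q) (ht : 0 ≤ t) :
    (ramp p q).val t = (q - p)⁻¹ * (min t q - min t p) := by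
  change ∫ t in (0 : ℝ)..t, (Ioc p q).indicator (fun _ => (q - p)⁻¹) t = _
  rw [intervalIntegral.integral_of_le ht, setIntegral_indicator measurableSet_Ioc, Ioc_inter_Ioc,
    setIntegral_const, max_eq_right hp, Real.volume_real_Ioc, smul_eq_mul, mul_comm]
  rcases le_total t p with h | h
  · rw [min_eq_left h, min_eq_left (h.trans hpq), max_eq_right (by linarith), sub_self]
  · rw [min_eq_right h, max_eq_left (by linarith [le_min h hpq])]

namespace Mesh

variable {N : ℕ} (m : Mesh N)

lemma x_le_x {i j : ℕ} (hij : i ≤ j) (hj : j ≤ N) : m.x i ≤ m.x j := by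
  induction j, hij using Nat.le_induction with
  | base => exact le_rfl
  | succ k _ ih => exact (ih (by omega)).trans (m.x_mono k (by omega)).le

lemma x_mem_Icc {i : ℕ} (hi : i ≤ N) : m.x i ∈ Icc (0 : ℝ) 1 :=
  ⟨m.x_zero ▸ m.x_le_x i.zero_le hi, m.x_last ▸ m.x_le_x hi le_rfl⟩

lemma h_pos {i : ℕ} (hi : i < N) : 0 < m.h i := sub_pos.2 (m.x_mono i hi)

lemma sum_h : ∑ i ∈ Finset.range N, m.h i = 1 := by
  simp only [h, Finset.sum_range_sub, m.x_zero, m.x_last, sub_zero]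

lemma exists_mem_Ioc {t : ℝ} (ht : t ∈ Ioc (0 : ℝ) 1) : ∃ i < N, t ∈ Ioc (m.x i) (m.x (i + 1)) := by
  have hex : ∃ n, t ≤ m.x n := ⟨N, m.x_last.symm ▸ ht.2⟩
  classical
  obtain ⟨i, hi⟩ : ∃ i, Nat.find hex = i + 1 := Nat.exists_eq_succ_of_ne_zero fun h => by
    have := Nat.find_spec hex
    rw [h, m.x_zero] at this
    exact ht.1.not_ge this
  refine ⟨i, ?_, not_le.1 (Nat.find_min hex (hi ▸ i.lt_succ_self)), hi ▸ Nat.find_spec hex⟩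
  have := Nat.find_min' hex (m.x_last.symm ▸ ht.2)
  omega

lemma ae_exists_mem_Ioo : ∀ᵐ t ∂unitMeasure, ∃ i < N, t ∈ Ioo (m.x i) (m.x (i + 1)) := by
  have hc : (range m.x).Countable := countable_range _
  filter_upwards [ae_restrict_mem measurableSet_Ioc, ae_restrict_of_ae (hc.ae_notMem volume)]
    with t ht hnode
  obtain ⟨i, hi, hlt, hle⟩ := m.exists_mem_Ioc ht
  exact ⟨i, hi, hlt, hle.lt_of_ne fun h => hnode ⟨i + 1, h.symm⟩⟩

lemma intervalIntegrable_element {g : ℝ → ℝ} (hg : IntervalIntegrable g volume 0 1) {i : ℕ}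
    (hi : i < N) : IntervalIntegrable g volume (m.x i) (m.x (i + 1)) := by
  refine hg.mono_set ?_
  rw [uIcc_of_le (m.x_mono i hi).le, uIcc_of_le zero_le_one]
  exact Icc_subset_Icc (m.x_mem_Icc hi.le).1 (m.x_mem_Icc hi).2

lemma sum_integral_element {g : ℝ → ℝ} (hg : IntervalIntegrable g volume 0 1) :
    ∑ i ∈ Finset.range N, ∫ t in (m.x i)..(m.x (i + 1)), g t = ∫ t in (0 : ℝ)..1, g t := by
  rw [intervalIntegral.sum_integral_adjacent_intervals (a := m.x) fun i hi =>
    m.intervalIntegrable_element hg hi, m.x_zero, m.x_last]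

lemma isPrimitiveOn_element {F f : ℝ → ℝ} (hF : IsPrimitiveOn F f 0 1) {i : ℕ} (hi : i < N) :
    IsPrimitiveOn F f (m.x i) (m.x (i + 1)) :=
  hF.mono (m.x_mem_Icc hi.le).1 (m.x_mono i hi).le (m.x_mem_Icc hi).2

namespace IsPL

variable {m} {u v : H1}

lemma dval_eq (hu : m.IsPL u) {i : ℕ} (hi : i < N) {t : ℝ} (ht : t ∈ Ioo (m.x i) (m.x (i + 1))) :
    u.dval t = (u.val (m.x (i + 1)) - u.val (m.x i)) / m.h i := by
  obtain ⟨s, hs⟩ := hu i hi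
  rw [hs t ht, (m.isPrimitiveOn_element u.isPrimitiveOn hi).eq_add_mul_of_eqOn_const hs
    (right_mem_Icc.2 (m.x_mono i hi).le), add_sub_cancel_left]
  exact (mul_div_cancel_right₀ s (m.h_pos hi).ne').symm

lemma val_eq (hu : m.IsPL u) {i : ℕ} (hi : i < N) {t : ℝ}
    (ht : t ∈ Icc (m.x i) (m.x (i + 1))) : u.val t = u.val (m.x i) +
      (u.val (m.x (i + 1)) - u.val (m.x i)) / m.h i * (t - m.x i) :=
  (m.isPrimitiveOn_element u.isPrimitiveOn hi).eq_add_mul_of_eqOn_const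
    (fun _ hx => hu.dval_eq hi hx) ht

lemma dval_ae_eq (hu : m.IsPL u) (hv : m.IsPL v)
    (h : ∀ i ≤ N, u.val (m.x i) = v.val (m.x i)) : u.dval =ᵐ[unitMeasure] v.dval := by
  filter_upwards [m.ae_exists_mem_Ioo] with t ⟨i, hi, ht⟩
  rw [hu.dval_eq hi ht, hv.dval_eq hi ht, h i hi.le, h (i + 1) hi]

lemma abs_val_le (hu : m.IsPL u) {M : ℝ} (hM : ∀ i ≤ N, |u.val (m.x i)| ≤ M) {t : ℝ}
    (ht : t ∈ Icc (0 : ℝ) 1) : |u.val t| ≤ M := by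
  rcases ht.1.eq_or_lt with rfl | ht₀
  · exact m.x_zero ▸ hM 0 N.zero_le
  obtain ⟨i, hi, hti⟩ := m.exists_mem_Ioc ⟨ht₀, ht.2⟩
  have hh := m.h_pos hi
  have hconv : u.val t = (1 - (t - m.x i) / m.h i) • u.val (m.x i)
      + ((t - m.x i) / m.h i) • u.val (m.x (i + 1)) := by
    rw [hu.val_eq hi (Ioc_subset_Icc_self hti), smul_eq_mul, smul_eq_mul]
    ring
  have hle : (t - m.x i) / m.h i ≤ 1 := (div_le_one hh).2 (sub_le_sub_right hti.2 _)
  simpa [hconv] using convex_closedBall (0 : ℝ) M (mem_closedBall_zero_iff.2 (hM i hi.le))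
    (mem_closedBall_zero_iff.2 (hM (i + 1) hi)) (sub_nonneg.2 hle)
    (div_nonneg (sub_nonneg.2 hti.1.le) hh.le) (sub_add_cancel 1 _)

lemma integral_dval_mul (hu : m.IsPL u) {F f : ℝ → ℝ} (hF : IsPrimitiveOn F f 0 1) :
    ∫ t in (0 : ℝ)..1, u.dval t * f t = ∑ i ∈ Finset.range N,
      (u.val (m.x (i + 1)) - u.val (m.x i)) / m.h i * (F (m.x (i + 1)) - F (m.x i)) := by
  have heq : ∀ i < N, EqOn (fun t => u.dval t * f t)
      (fun t => (u.val (m.x (i + 1)) - u.val (m.x i)) / m.h i * f t)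
      (uIoo (m.x i) (m.x (i + 1))) := fun i hi t ht => by
    simp only [hu.dval_eq hi (uIoo_of_le (m.x_mono i hi).le ▸ ht)]
  rw [← m.x_zero, ← m.x_last, ← intervalIntegral.sum_integral_adjacent_intervals (a := m.x)]
  · refine Finset.sum_congr rfl fun i hi => ?_
    have hi := Finset.mem_range.1 hi
    rw [intervalIntegral.integral_congr_uIoo (heq i hi), intervalIntegral.integral_const_mul,
      (m.isPrimitiveOn_element hF hi).integral_eq_sub (m.x_mono i hi).le]
  · exact fun i hi => ((m.intervalIntegrable_element hF.integrable hi).const_mul _).congr_uIoo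
      (heq i hi).symm

end IsPL

/-- The piecewise linear function on `m` with increments `z (i + 1) - z i`; if `z 0 = 0` this is
the function with nodal values `z`. -/
def interp : (ℕ → ℝ) →ₗ[ℝ] H1 where
  toFun z := ∑ i ∈ Finset.range N, (z (i + 1) - z i) • ramp (m.x i) (m.x (i + 1))
  map_add' z w := by
    rw [← Finset.sum_add_distrib]
    exact Finset.sum_congr rfl fun i _ => by
      rw [← add_smul, Pi.add_apply, Pi.add_apply, add_sub_add_comm]
  map_smul' c z := by
    rw [RingHom.id_apply, Finset.smul_sum]
    exact Finset.sum_congr rfl fun i _ => by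
      rw [smul_smul, Pi.smul_apply, Pi.smul_apply, ← smul_sub, smul_eq_mul]

lemma ramp_val_x {i j : ℕ} (hi : i < N) (hj : j ≤ N) :
    (ramp (m.x i) (m.x (i + 1))).val (m.x j) = if i < j then 1 else 0 := by
  rw [ramp_val (m.x_mem_Icc hi.le).1 (m.x_mono i hi).le (m.x_mem_Icc hj).1]
  split_ifs with h
  · rw [min_eq_right (m.x_le_x (by omega) hj), min_eq_right (m.x_le_x (by omega) hj)]
    exact inv_mul_cancel₀ (m.h_pos hi).ne'
  · rw [min_eq_left (m.x_le_x (by omega) (by omega)), min_eq_left (m.x_le_x (by omega) hi.le),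
      sub_self, mul_zero]

lemma interp_val_x (z : ℕ → ℝ) {j : ℕ} (hj : j ≤ N) :
    (m.interp z).val (m.x j) = z j - z 0 := by
  have hsum : (m.interp z).val (m.x j) = ∑ i ∈ Finset.range N,
      (z (i + 1) - z i) * (ramp (m.x i) (m.x (i + 1))).val (m.x j) := H1.val_sum_smul ..
  rw [hsum, Finset.sum_congr rfl fun i hi => by rw [m.ramp_val_x (Finset.mem_range.1 hi) hj]]
  simp only [mul_ite, mul_one, mul_zero, ← Finset.sum_filter]
  rw [← Finset.sum_range_sub]
  congr 1
  ext i
  simp only [Finset.mem_filter, Finset.mem_range]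
  omega

lemma ramp_dval_eqOn {i j : ℕ} (hi : i < N) (hj : j < N) {t : ℝ}
    (ht : t ∈ Ioo (m.x i) (m.x (i + 1))) :
    (ramp (m.x j) (m.x (j + 1))).dval t = if j = i then (m.h i)⁻¹ else 0 := by
  change (Ioc (m.x j) (m.x (j + 1))).indicator (fun _ => (m.h j)⁻¹) t = _
  split_ifs with h
  · rw [h, indicator_of_mem (Ioo_subset_Ioc_self ht)]
  · refine indicator_of_notMem (fun hmem => ?_) _
    rcases lt_or_gt_of_ne h with h | h
    · exact (hmem.2.trans (m.x_le_x (Nat.succ_le_of_lt h) hi.le)).not_gt ht.1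
    · exact (ht.2.trans_le (m.x_le_x (Nat.succ_le_of_lt h) hj.le)).not_gt hmem.1

lemma interp_isPL (z : ℕ → ℝ) : m.IsPL (m.interp z) := by
  refine fun i hi => ⟨∑ j ∈ Finset.range N, (z (j + 1) - z j) * if j = i then (m.h i)⁻¹ else 0,
    fun t ht => (H1.dval_sum_smul ..).trans (Finset.sum_congr rfl fun j hj => ?_)⟩
  rw [m.ramp_dval_eqOn hi (Finset.mem_range.1 hj) ht]

/-- The nodal basis functions of the interior nodes. -/
def hat (k : Finset.Ioo 0 N) : H1 := m.interp (Pi.single k 1)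

lemma hat_val_x (k : Finset.Ioo 0 N) {j : ℕ} (hj : j ≤ N) :
    (m.hat k).val (m.x j) = Pi.single (M := fun _ => ℝ) (k : ℕ) 1 j := by
  rw [hat, interp_val_x _ _ hj, Pi.single_eq_of_ne (Finset.mem_Ioo.1 k.2).1.ne, sub_zero]

lemma hat_val_zero (k : Finset.Ioo 0 N) : (m.hat k).val 0 = 0 := by
  have h := m.hat_val_x k N.zero_le
  rwa [m.x_zero, Pi.single_eq_of_ne (Finset.mem_Ioo.1 k.2).1.ne] at h

lemma hat_val_one (k : Finset.Ioo 0 N) : (m.hat k).val 1 = 0 := by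
  have h := m.hat_val_x k le_rfl
  rwa [m.x_last, Pi.single_eq_of_ne (Finset.mem_Ioo.1 k.2).2.ne'] at h

lemma linearIndependent_hat :
    LinearIndependent ℝ fun k => (Icc (0 : ℝ) 1).domRestrict (m.hat k).val := by
  refine Fintype.linearIndependent_iff.2 fun c hc j => ?_
  have hj := (Finset.mem_Ioo.1 j.2).2.le
  simpa [m.hat_val_x _ hj, Pi.single_apply, Subtype.ext_iff.symm] using
    congrFun hc ⟨m.x j, m.x_mem_Icc hj⟩

lemma sum_smul_hat (c : Finset.Ioo 0 N → ℝ) :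
    ∑ k, c k • m.hat k = m.interp (∑ k, c k • Pi.single (k : ℕ) 1) := by
  simp only [map_sum, map_smul, hat]

lemma sum_nodal_smul_hat_val_x {v : H1} (h₀ : v.val 0 = 0) (h₁ : v.val 1 = 0) {i : ℕ}
    (hi : i ≤ N) : (∑ k : Finset.Ioo 0 N, v.val (m.x k) • m.hat k).val (m.x i) = v.val (m.x i) := by
  simp only [H1.val_sum_smul, m.hat_val_x _ hi, Pi.single_apply, mul_ite, mul_one, mul_zero]
  rw [Finset.sum_coe_sort (Finset.Ioo 0 N) fun k => if i = k then v.val (m.x k) else 0,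
    Finset.sum_ite_eq, ite_eq_left_iff, Finset.mem_Ioo]
  intro hbdry
  obtain rfl | rfl : i = 0 ∨ i = N := by omega
  · rw [m.x_zero, h₀]
  · rw [m.x_last, h₁]

/-- The finite element solution on `m`. -/
def fe (P : Coeffs) (f : ℝ → ℝ) : H1 := P.galerkin f m.hat

lemma det_stiffness_hat_ne_zero (P : Coeffs) : (P.stiffness m.hat).det ≠ 0 :=
  P.det_stiffness_ne_zero m.hat_val_zero m.hat_val_one m.linearIndependent_hat

lemma isFESolution_fe (P : Coeffs) {f : ℝ → ℝ} (hf : MemLp f 1 unitMeasure) :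
    P.IsFESolution f m (m.fe P f) := by
  have hPL : ∀ c : Finset.Ioo 0 N → ℝ, m.IsPL (∑ k, c k • m.hat k) := fun c =>
    m.sum_smul_hat c ▸ m.interp_isPL _
  refine ⟨?_, ?_, hPL _, fun v h₀ h₁ hv => ?_⟩
  · simp [fe, Coeffs.galerkin, H1.val_sum_smul, hat_val_zero]
  · simp [fe, Coeffs.galerkin, H1.val_sum_smul, hat_val_one]
  set w := ∑ k : Finset.Ioo 0 N, v.val (m.x k) • m.hat k with hw
  have hnodes : ∀ i ≤ N, v.val (m.x i) = w.val (m.x i) := fun i hi =>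
    (m.sum_nodal_smul_hat_val_x h₀ h₁ hi).symm
  have hdval := hv.dval_ae_eq (hPL _) hnodes
  have hval : ∀ x ∈ Icc (0 : ℝ) 1, v.val x = w.val x := fun x hx =>
    H1.val_eq_of_dval_ae_eq (m.x_zero ▸ hnodes 0 N.zero_le) hdval hx
  rw [P.B_congr_right _ hdval hval, ip_congr f hval, hw, P.B_sum_smul_right, ip_sum_smul hf]
  exact Finset.sum_congr rfl fun k _ => by rw [fe, P.B_galerkin f (m.det_stiffness_hat_ne_zero P)]

end Mesh

end FiniteElement

section Residual

open Set ENNReal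

lemma L2_mul_le {g k : ℝ → ℝ} (hg : MemLp g ∞ unitMeasure) (hk : MemLp k 2 unitMeasure) :
    L2 (g * k) ≤ lpNorm g ∞ unitMeasure * L2 k := by
  rw [L2_eq_lpNorm (hg.1.mul hk.1), L2_eq_lpNorm hk.1, ← toReal_eLpNorm (hg.1.mul hk.1),
    ← toReal_eLpNorm hg.1, ← toReal_eLpNorm hk.1, ← toReal_mul]
  exact toReal_mono (mul_ne_top hg.eLpNorm_ne_top hk.eLpNorm_ne_top)
    (eLpNorm_smul_le_eLpNorm_top_mul_eLpNorm 2 hk.1 g)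

lemma L2_le_of_abs_le {g : ℝ → ℝ} {M : ℝ} (hg : AEStronglyMeasurable g unitMeasure) (hM : 0 ≤ M)
    (h : ∀ x ∈ Icc (0 : ℝ) 1, |g x| ≤ M) : L2 g ≤ M := by
  have hbound : ∀ᵐ x ∂unitMeasure, ‖g x‖ ≤ M := by
    filter_upwards [ae_restrict_mem measurableSet_Ioc] with x hx
    exact h x (Ioc_subset_Icc_self hx)
  rw [L2_eq_lpNorm hg, ← toReal_eLpNorm hg]
  refine toReal_le_of_le_ofReal hM ((eLpNorm_le_of_ae_bound hbound).trans_eq ?_)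
  simp

lemma abs_ip_le {g : ℝ → ℝ} {v : H1} {M : ℝ} (hg : MemLp g 1 unitMeasure)
    (hM : ∀ x ∈ Icc (0 : ℝ) 1, |v.val x| ≤ M) : |ip g v| ≤ L1 g * M := by
  have hint : IntervalIntegrable (fun t => g t * v.val t) volume 0 1 :=
    intervalIntegrable_unit_iff.2 (hg.integrable_mul v.memLp_val)
  have hg' : IntervalIntegrable g volume 0 1 :=
    intervalIntegrable_unit_iff.2 (hg.integrable le_rfl)
  rw [L1, ← intervalIntegral.integral_mul_const]
  refine (intervalIntegral.abs_integral_le_integral_abs zero_le_one).trans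
    (intervalIntegral.integral_mono_on zero_le_one hint.abs (hg'.abs.mul_const M) fun x hx => ?_)
  rw [abs_mul]
  exact mul_le_mul_of_nonneg_left (hM x hx) (abs_nonneg _)

namespace Coeffs

variable (P : Coeffs) (f : ℝ → ℝ)

lemma res_eq_add (w : H1) : P.res f w = f + P.res 0 w := by
  ext t
  simp only [res, Pi.add_apply, Pi.zero_apply]
  ring

lemma res_zero_eq (w : H1) : P.res 0 w = (P.a' - P.b) * w.dval + -(P.c * w.val) := by
  ext t
  simp only [res, Pi.add_apply, Pi.mul_apply, Pi.sub_apply, Pi.neg_apply, Pi.zero_apply]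
  ring

lemma memLp_res_zero (w : H1) : MemLp (P.res 0 w) 2 unitMeasure := by
  rw [res_zero_eq]
  exact (w.memLp_dval.mul (P.memLp_a'.sub P.memLp_b)).add
    ((w.memLp_val.mul (r := ∞) P.memLp_c).mono_exponent le_top).neg

variable {f} in
lemma memLp_res (hf : MemLp f 2 unitMeasure) (w : H1) : MemLp (P.res f w) 2 unitMeasure := by
  rw [res_eq_add]
  exact hf.add (P.memLp_res_zero w)

/-- A bound for the part `a' w' - b w' - c w` of the residual, relative to `‖w'‖_{L²}`. -/
def resBound : ℝ := lpNorm (P.a' - P.b) ∞ unitMeasure + lpNorm P.c ∞ unitMeasure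

lemma resBound_nonneg : 0 ≤ P.resBound := add_nonneg lpNorm_nonneg lpNorm_nonneg

lemma L2_res_zero_le {w : H1} (h₀ : w.val 0 = 0) : L2 (P.res 0 w) ≤ P.resBound * L2 w.dval := by
  have hval : MemLp w.val 2 unitMeasure := w.memLp_val.mono_exponent le_top
  have hdval := P.memLp_a'.sub P.memLp_b
  have hL2val : L2 w.val ≤ L2 w.dval :=
    L2_le_of_abs_le hval.1 (Real.sqrt_nonneg _) fun x hx => w.abs_val_le_L2 h₀ hx
  have hneg : L2 (-(P.c * w.val)) = L2 (P.c * w.val) := by simp [L2]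
  calc L2 (P.res 0 w)
      ≤ L2 ((P.a' - P.b) * w.dval) + L2 (-(P.c * w.val)) :=
        P.res_zero_eq w ▸ L2_add_le (w.memLp_dval.mul hdval) (hval.mul P.memLp_c).neg
    _ ≤ lpNorm (P.a' - P.b) ∞ unitMeasure * L2 w.dval + lpNorm P.c ∞ unitMeasure * L2 w.dval := by
        rw [hneg]
        exact add_le_add (L2_mul_le hdval w.memLp_dval)
          ((L2_mul_le P.memLp_c hval).trans (mul_le_mul_of_nonneg_left hL2val lpNorm_nonneg))
    _ = P.resBound * L2 w.dval := (add_mul _ _ _).symm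

variable {f}

lemma ip_res_add_B (hf : MemLp f 2 unitMeasure) (u v : H1) : ip (P.res f u) v + P.B u v
    = ip f v + ∫ t in (0 : ℝ)..1, u.dval t * (P.a' t * v.val t + P.a t * v.dval t) := by
  have hres : Integrable (fun t => P.res f u t * v.val t) unitMeasure :=
    (P.memLp_res hf u).integrable_mul (v.memLp_val.mono_exponent (p := 2) le_top)
  have hfv : Integrable (fun t => f t * v.val t) unitMeasure :=
    hf.integrable_mul (v.memLp_val.mono_exponent (p := 2) le_top)
  have hflux : Integrable (fun t => u.dval t * (P.a' t * v.val t + P.a t * v.dval t))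
      unitMeasure :=
    u.memLp_dval.integrable_mul
      (((v.memLp_val.mul (r := ∞) P.memLp_a').mono_exponent (p := 2) le_top).add
        (v.memLp_dval.mul P.memLp_a))
  rw [ip, ip, B_eq_integral_integrand, integral_unit, integral_unit, integral_unit,
    ← integral_add hres (P.integrable_integrand u v), ← integral_add hfv hflux]
  congr with t
  simp only [res, integrand]
  ring

namespace IsFESolution

variable {P} {N : ℕ} {m : Mesh N} {u : H1}

lemma a0_mul_L2_dval_le_L1 (hu : P.IsFESolution f m u) (hf : MemLp f 1 unitMeasure) :
    P.a0 * L2 u.dval ≤ L1 f := by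
  obtain ⟨h₀, h₁, hPL, hB⟩ := hu
  have henergy : P.a0 * L2 u.dval ^ 2 ≤ L1 f * L2 u.dval :=
    calc P.a0 * L2 u.dval ^ 2 ≤ P.B u u := P.coercive h₀ h₁
      _ = ip f u := hB u h₀ h₁ hPL
      _ ≤ L1 f * L2 u.dval :=
        (le_abs_self _).trans (abs_ip_le hf fun x hx => u.abs_val_le_L2 h₀ hx)
  rcases (show 0 ≤ L2 u.dval from Real.sqrt_nonneg _).eq_or_lt with h | h
  · simpa [← h] using L1_nonneg f
  · exact le_of_mul_le_mul_right (by linarith) h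

/-- `v` is the piecewise linear interpolant of `u / a`: since `a v` agrees with `u` at the nodes
and `u'` is elementwise constant, `∫ u' (a v)' = ∫ u' ^ 2`. -/
lemma sq_L2_dval_eq_ip_res (hu : P.IsFESolution f m u) (hf : MemLp f 2 unitMeasure) {v : H1}
    (hv : m.IsPL v) (hva : ∀ i ≤ N, v.val (m.x i) = u.val (m.x i) / P.a (m.x i)) :
    L2 u.dval ^ 2 = ip (P.res f u) v := by
  obtain ⟨h₀, h₁, hPL, hB⟩ := hu
  have hv₀ : v.val 0 = 0 := by simpa [m.x_zero, h₀] using hva 0 N.zero_le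
  have hv₁ : v.val 1 = 0 := by simpa [m.x_last, h₁] using hva N le_rfl
  have hnodes : ∀ i ≤ N, P.a (m.x i) * v.val (m.x i) = u.val (m.x i) := fun i hi => by
    rw [hva i hi, mul_div_cancel₀]
    exact (P.a0_pos.trans_le (P.a_lb _ (m.x_mem_Icc hi))).ne'
  have hflux : ∫ t in (0 : ℝ)..1, u.dval t * (P.a' t * v.val t + P.a t * v.dval t)
      = L2 u.dval ^ 2 := by
    simp only [sq_L2, sq (u.dval _)]
    rw [hPL.integral_dval_mul (P.isPrimitiveOn_a.mul v.isPrimitiveOn zero_le_one),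
      hPL.integral_dval_mul u.isPrimitiveOn]
    refine Finset.sum_congr rfl fun i hi => ?_
    rw [hnodes i (Finset.mem_range.1 hi).le, hnodes (i + 1) (Finset.mem_range.1 hi)]
  have hid := P.ip_res_add_B hf u v
  rw [hflux, hB v hv₀ hv₁ hv] at hid
  linarith

lemma a0_mul_L2_dval_le_L1_res (hu : P.IsFESolution f m u) (hf : MemLp f 2 unitMeasure) :
    P.a0 * L2 u.dval ≤ L1 (P.res f u) := by
  have hL2 : 0 ≤ L2 u.dval := Real.sqrt_nonneg _
  set z : ℕ → ℝ := fun i => u.val (m.x i) / P.a (m.x i) with hz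
  have hv : ∀ i ≤ N, (m.interp z).val (m.x i) = z i := fun i hi => by
    rw [m.interp_val_x z hi, sub_eq_self]
    simp only [hz, m.x_zero, hu.1, zero_div]
  have hbound : ∀ i ≤ N, |(m.interp z).val (m.x i)| ≤ L2 u.dval / P.a0 := fun i hi => by
    have ha := P.a_lb _ (m.x_mem_Icc hi)
    rw [hv i hi, abs_div, abs_of_pos (P.a0_pos.trans_le ha)]
    exact div_le_div₀ hL2 (u.abs_val_le_L2 hu.1 (m.x_mem_Icc hi)) P.a0_pos ha
  have hsq : L2 u.dval ^ 2 ≤ L1 (P.res f u) * (L2 u.dval / P.a0) := by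
    rw [hu.sq_L2_dval_eq_ip_res hf (m.interp_isPL z) hv]
    exact (le_abs_self _).trans (abs_ip_le ((P.memLp_res hf u).mono_exponent one_le_two)
      fun x hx => (m.interp_isPL z).abs_val_le hbound hx)
  rcases hL2.eq_or_lt with h | h
  · simpa [← h] using L1_nonneg _
  · rw [← mul_div_assoc, le_div_iff₀ P.a0_pos] at hsq
    exact le_of_mul_le_mul_right (by linarith) h

end IsFESolution

/-- The constant in the equivalence of data and residual of finite element solutions. -/
def stabConst : ℝ := 1 + P.resBound / P.a0

lemma stabConst_pos : 0 < P.stabConst :=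
  add_pos_of_pos_of_nonneg one_pos (div_nonneg P.resBound_nonneg P.a0_pos.le)

namespace IsFESolution

variable {P} {N : ℕ} {m : Mesh N} {u : H1}

lemma L1_le_stabConst_mul (hu : P.IsFESolution f m u) (hf : MemLp f 2 unitMeasure) :
    L1 f ≤ P.stabConst * L1 (P.res f u) := by
  have hr := P.memLp_res hf u
  have hdiff : P.res f u - f = P.res 0 u := by rw [P.res_eq_add f u, add_sub_cancel_left]
  calc L1 f ≤ L1 (P.res f u) + L1 (P.res 0 u) := hdiff ▸
        L1_le_add_L1_sub (hf.mono_exponent one_le_two) (hr.mono_exponent one_le_two)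
    _ ≤ L1 (P.res f u) + P.resBound * L2 u.dval := by
        gcongr
        exact (L1_le_L2 (P.memLp_res_zero u)).trans (P.L2_res_zero_le hu.1)
    _ ≤ L1 (P.res f u) + P.resBound * (L1 (P.res f u) / P.a0) := by
        gcongr
        · exact P.resBound_nonneg
        · exact (le_div_iff₀' P.a0_pos).2 (hu.a0_mul_L2_dval_le_L1_res hf)
    _ = P.stabConst * L1 (P.res f u) := by rw [stabConst]; ring

lemma L2_res_le_stabConst_mul (hu : P.IsFESolution f m u) (hf : MemLp f 2 unitMeasure) :
    L2 (P.res f u) ≤ P.stabConst * L2 f := by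
  calc L2 (P.res f u) ≤ L2 f + L2 (P.res 0 u) :=
        P.res_eq_add f u ▸ L2_add_le hf (P.memLp_res_zero u)
    _ ≤ L2 f + P.resBound * (L2 f / P.a0) := by
        gcongr
        refine (P.L2_res_zero_le hu.1).trans
          (mul_le_mul_of_nonneg_left ?_ P.resBound_nonneg)
        exact (le_div_iff₀' P.a0_pos).2
          ((hu.a0_mul_L2_dval_le_L1 (hf.mono_exponent one_le_two)).trans (L1_le_L2 hf))
    _ = P.stabConst * L2 f := by rw [stabConst]; ring

end IsFESolution

end Coeffs

end Residual

section Intensity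

open Set ENNReal

lemma sum_mul_pow_four_le {ι : Type*} (s : Finset ι) {w a : ι → ℝ} (hw : ∀ i, 0 ≤ w i)
    (ha : ∀ i, 0 ≤ a i) : (∑ i ∈ s, w i * a i) ^ 4
      ≤ (∑ i ∈ s, w i * a i ^ ((2 : ℝ) / 3)) ^ 3 * ∑ i ∈ s, w i * a i ^ 2 := by
  have hsplit : ∀ i, w i * a i ^ ((2 : ℝ) / 3) * a i ^ ((1 : ℝ) / 3) = w i * a i := fun i => by
    rw [mul_assoc, ← Real.rpow_add_of_nonneg (ha i) (by norm_num) (by norm_num)]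
    norm_num
  have hpow : ∀ i, w i * a i ^ ((2 : ℝ) / 3) * (a i ^ ((1 : ℝ) / 3)) ^ (4 : ℝ) = w i * a i ^ 2 :=
    fun i => by
      rw [← Real.rpow_mul (ha i), mul_assoc,
        ← Real.rpow_add_of_nonneg (ha i) (by norm_num) (by norm_num)]
      norm_num
  have holder := Real.inner_le_weight_mul_Lp_of_nonneg s (p := 4) (by norm_num)
    (fun i => w i * a i ^ ((2 : ℝ) / 3)) (fun i => a i ^ ((1 : ℝ) / 3))
    (fun i => mul_nonneg (hw i) (Real.rpow_nonneg (ha i) _)) fun i => Real.rpow_nonneg (ha i) _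
  simp only [hsplit, hpow] at holder
  have hA : 0 ≤ ∑ i ∈ s, w i * a i ^ ((2 : ℝ) / 3) :=
    Finset.sum_nonneg fun i _ => mul_nonneg (hw i) (Real.rpow_nonneg (ha i) _)
  have hB : 0 ≤ ∑ i ∈ s, w i * a i ^ 2 :=
    Finset.sum_nonneg fun i _ => mul_nonneg (hw i) (sq_nonneg _)
  have hlhs : 0 ≤ ∑ i ∈ s, w i * a i := Finset.sum_nonneg fun i _ => mul_nonneg (hw i) (ha i)
  refine (pow_le_pow_left₀ hlhs holder 4).trans_eq ?_
  rw [mul_pow, ← Real.rpow_mul_natCast hA, ← Real.rpow_mul_natCast hB]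
  norm_num

namespace Mesh

variable {N : ℕ} (m : Mesh N) (g : ℝ → ℝ)

lemma avg_nonneg (i : ℕ) : 0 ≤ m.avg g i := Real.sqrt_nonneg _

lemma alpha_nonneg : 0 ≤ m.alpha g :=
  pow_nonneg (Finset.sum_nonneg fun i hi => mul_nonneg (m.h_pos (Finset.mem_range.1 hi)).le
    (Real.rpow_nonneg (m.avg_nonneg g i) _)) 3

lemma h_mul_sq_avg {i : ℕ} (hi : i < N) :
    m.h i * m.avg g i ^ 2 = ∫ t in (m.x i)..(m.x (i + 1)), g t ^ 2 := by
  have hint : 0 ≤ ∫ t in (m.x i)..(m.x (i + 1)), g t ^ 2 :=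
    intervalIntegral.integral_nonneg (m.x_mono i hi).le fun t _ => sq_nonneg _
  rw [avg, Real.sq_sqrt (mul_nonneg (one_div_nonneg.2 (m.h_pos hi).le) hint), one_div,
    mul_inv_cancel_left₀ (m.h_pos hi).ne']

variable {g}

lemma sum_h_mul_sq_avg (hg : MemLp g 2 unitMeasure) :
    ∑ i ∈ Finset.range N, m.h i * m.avg g i ^ 2 = L2 g ^ 2 := by
  rw [sq_L2, ← m.sum_integral_element (intervalIntegrable_unit_iff.2 hg.integrable_sq)]
  exact Finset.sum_congr rfl fun i hi => m.h_mul_sq_avg g (Finset.mem_range.1 hi)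

lemma integral_abs_le_h_mul_avg (hg : MemLp g 2 unitMeasure) {i : ℕ} (hi : i < N) :
    ∫ t in (m.x i)..(m.x (i + 1)), |g t| ≤ m.h i * m.avg g i := by
  have hh := m.h_pos hi
  have hsub : Ioc (m.x i) (m.x (i + 1)) ⊆ Ioc 0 1 :=
    Ioc_subset_Ioc (m.x_mem_Icc hi.le).1 (m.x_mem_Icc hi).2
  have hg' : MemLp g (ENNReal.ofReal 2) (volume.restrict (Ioc (m.x i) (m.x (i + 1)))) := by
    simpa using hg.mono_measure (Measure.restrict_mono hsub le_rfl)
  have hCS := integral_mul_norm_le_Lp_mul_Lq Real.HolderConjugate.two_two hg'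
    (memLp_const (1 : ℝ))
  simp only [norm_one, mul_one, Real.norm_eq_abs, Real.rpow_two, sq_abs, one_pow,
    ← Real.sqrt_eq_rpow, ← intervalIntegral.integral_of_le (m.x_mono i hi).le,
    intervalIntegral.integral_const, smul_eq_mul] at hCS
  refine hCS.trans_eq ?_
  change _ * √(m.h i) = _
  rw [← m.h_mul_sq_avg g hi, Real.sqrt_mul hh.le, Real.sqrt_sq (m.avg_nonneg g i),
    mul_right_comm, Real.mul_self_sqrt hh.le]

lemma L1_pow_four_le_alpha_mul (hg : MemLp g 2 unitMeasure) :
    L1 g ^ 4 ≤ m.alpha g * L2 g ^ 2 := by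
  have hL1 : L1 g ≤ ∑ i ∈ Finset.range N, m.h i * m.avg g i := by
    rw [L1, ← m.sum_integral_element
      (intervalIntegrable_unit_iff.2 (hg.integrable one_le_two)).abs]
    exact Finset.sum_le_sum fun i hi => m.integral_abs_le_h_mul_avg hg (Finset.mem_range.1 hi)
  refine (pow_le_pow_left₀ (L1_nonneg g) hL1 4).trans ?_
  rw [alpha, ← m.sum_h_mul_sq_avg hg]
  simp only [Finset.sum_range]
  exact sum_mul_pow_four_le _ (fun i => (m.h_pos i.2).le) fun i => m.avg_nonneg g i

end Mesh

namespace Coeffs.IsFESolution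

variable {P : Coeffs} {f : ℝ → ℝ} {N : ℕ} {m : Mesh N} {u : H1}

lemma L1_pow_four_le_alpha_mul (hu : P.IsFESolution f m u) (hf : MemLp f 2 unitMeasure) :
    L1 f ^ 4 ≤ P.stabConst ^ 4 * (m.alpha (P.res f u) * L2 (P.res f u) ^ 2) :=
  calc L1 f ^ 4 ≤ (P.stabConst * L1 (P.res f u)) ^ 4 :=
        pow_le_pow_left₀ (L1_nonneg f) (hu.L1_le_stabConst_mul hf) 4
    _ = P.stabConst ^ 4 * L1 (P.res f u) ^ 4 := mul_pow _ _ _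
    _ ≤ _ := mul_le_mul_of_nonneg_left (m.L1_pow_four_le_alpha_mul (P.memLp_res hf u))
        (pow_nonneg P.stabConst_pos.le 4)

lemma alpha_res_pos (hu : P.IsFESolution f m u) (hf : MemLp f 2 unitMeasure) (hL1 : 0 < L1 f) :
    0 < m.alpha (P.res f u) := by
  refine (m.alpha_nonneg _).lt_of_ne fun h => ?_
  have hle := hu.L1_pow_four_le_alpha_mul hf
  rw [← h, zero_mul, mul_zero] at hle
  exact (pow_pos hL1 4).not_ge hle

lemma inv_alpha_mul_sq_L2_res_le (hu : P.IsFESolution f m u) (hf : MemLp f 2 unitMeasure)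
    (hL1 : 0 < L1 f) : (m.alpha (P.res f u))⁻¹ * L2 (P.res f u) ^ 2
      ≤ P.stabConst ^ 8 * L2 f ^ 4 / L1 f ^ 4 := by
  have hα := hu.alpha_res_pos hf hL1
  rw [le_div_iff₀ (pow_pos hL1 4), mul_assoc, inv_mul_le_iff₀ hα]
  calc L2 (P.res f u) ^ 2 * L1 f ^ 4
      ≤ L2 (P.res f u) ^ 2 * (P.stabConst ^ 4 * (m.alpha (P.res f u) * L2 (P.res f u) ^ 2)) :=
        mul_le_mul_of_nonneg_left (hu.L1_pow_four_le_alpha_mul hf) (sq_nonneg _)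
    _ = m.alpha (P.res f u) * (P.stabConst ^ 4 * L2 (P.res f u) ^ 4) := by ring
    _ ≤ m.alpha (P.res f u) * (P.stabConst ^ 4 * (P.stabConst * L2 f) ^ 4) := by
        gcongr
        · exact Real.sqrt_nonneg _
        · exact hu.L2_res_le_stabConst_mul hf
    _ = m.alpha (P.res f u) * (P.stabConst ^ 8 * L2 f ^ 4) := by ring

end Coeffs.IsFESolution

end Intensity

section LpFamily

open Set ENNReal Filter Topology

lemma continuous_integral_Lp_prod (μ : Measure ℝ) [NullSingletonClass μ] :
    Continuous fun w : Lp ℝ 1 μ × ℝ => ∫ t in (0 : ℝ)..w.2, w.1 t ∂μ := by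
  have hint : ∀ (g : Lp ℝ 1 μ) c d, IntervalIntegrable g μ c d := fun g c d =>
    (L1.integrable_coeFn g).intervalIntegrable
  refine continuous_prod_of_continuous_lipschitzWith _ 1
    (fun g => intervalIntegral.continuous_primitive (hint g) 0) fun s =>
    LipschitzWith.mk_one fun g k => ?_
  simp only [dist_eq_norm]
  rw [← intervalIntegral.integral_sub (hint g _ _) (hint k _ _), L1.norm_eq_integral_norm]
  calc ‖∫ t in (0 : ℝ)..s, (g t - k t) ∂μ‖
      ≤ ∫ t in uIoc 0 s, ‖g t - k t‖ ∂μ :=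
        intervalIntegral.norm_integral_le_integral_norm_uIoc
    _ ≤ ∫ t, ‖g t - k t‖ ∂μ :=
        setIntegral_le_integral ((L1.integrable_coeFn g).sub (L1.integrable_coeFn k)).norm
          (Eventually.of_forall fun _ => norm_nonneg _)
    _ = ∫ t, ‖(g - k) t‖ ∂μ :=
        integral_congr_ae ((Lp.coeFn_sub g k).mono fun t ht => by simp only [ht, Pi.sub_apply])

variable {X : Type*} [TopologicalSpace X] {p q r : ℝ≥0∞} {F G : X → ℝ → ℝ}

/-- The family of functions `F x` on the unit interval depends continuously on `x` in `L^p`. -/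
structure LpContinuous (p : ℝ≥0∞) [Fact (1 ≤ p)] (F : X → ℝ → ℝ) : Prop where
  memLp : ∀ x, MemLp (F x) p unitMeasure
  continuous_toLp : Continuous fun x => (memLp x).toLp (F x)

namespace LpContinuous

lemma const [Fact (1 ≤ p)] {g : ℝ → ℝ} (hg : MemLp g p unitMeasure) :
    LpContinuous p fun _ : X => g :=
  ⟨fun _ => hg, continuous_const⟩

lemma comp [Fact (1 ≤ p)] (hF : LpContinuous p F) {Y : Type*} [TopologicalSpace Y] {φ : Y → X}
    (hφ : Continuous φ) : LpContinuous p fun y => F (φ y) :=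
  ⟨fun _ => hF.memLp _, hF.continuous_toLp.comp hφ⟩

lemma add [Fact (1 ≤ p)] (hF : LpContinuous p F) (hG : LpContinuous p G) :
    LpContinuous p (F + G) :=
  ⟨fun x => (hF.memLp x).add (hG.memLp x), hF.continuous_toLp.add hG.continuous_toLp⟩

lemma sub [Fact (1 ≤ p)] (hF : LpContinuous p F) (hG : LpContinuous p G) :
    LpContinuous p (F - G) :=
  ⟨fun x => (hF.memLp x).sub (hG.memLp x), hF.continuous_toLp.sub hG.continuous_toLp⟩

lemma mul [Fact (1 ≤ p)] [Fact (1 ≤ q)] [Fact (1 ≤ r)] [HolderTriple p q r]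
    (hF : LpContinuous p F) (hG : LpContinuous q G) : LpContinuous r (F * G) where
  memLp x := (hG.memLp x).mul (hF.memLp x)
  continuous_toLp := by
    have hcont := (((ContinuousLinearMap.mul ℝ ℝ).holderL unitMeasure p q r).continuous.comp
      hF.continuous_toLp).clm_apply hG.continuous_toLp
    refine hcont.congr fun x => Lp.ext ?_
    filter_upwards [(ContinuousLinearMap.mul ℝ ℝ).coeFn_holder (r := r)
      ((hF.memLp x).toLp (F x)) ((hG.memLp x).toLp (G x)), (hF.memLp x).coeFn_toLp,
      (hG.memLp x).coeFn_toLp, ((hG.memLp x).mul (r := r) (hF.memLp x)).coeFn_toLp]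
      with t ht hFt hGt hFGt
    change (ContinuousLinearMap.mul ℝ ℝ).holder r _ _ t = _
    rw [ht, hFt, hGt, ContinuousLinearMap.mul_apply']
    exact hFGt.symm

lemma continuous_integral (hF : LpContinuous 1 F) :
    Continuous fun x => ∫ t in (0 : ℝ)..1, F x t := by
  refine (MeasureTheory.continuous_integral.comp hF.continuous_toLp).congr fun x => ?_
  rw [integral_unit]
  exact integral_congr_ae (hF.memLp x).coeFn_toLp

lemma continuous_intervalIntegral (hF : LpContinuous 1 F) {a b : X → ℝ} (ha : Continuous a)
    (hb : Continuous b) : Continuous fun x => ∫ t in (a x)..(b x), F x t ∂unitMeasure := by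
  have hint : ∀ (x : X) c d, IntervalIntegrable (F x) unitMeasure c d := fun x c d =>
    ((hF.memLp x).integrable le_rfl).intervalIntegrable
  have hprim : ∀ {c : X → ℝ}, Continuous c →
      Continuous fun x => ∫ t in (0 : ℝ)..(c x), F x t ∂unitMeasure := fun hc =>
    ((continuous_integral_Lp_prod unitMeasure).comp (hF.continuous_toLp.prodMk hc)).congr fun x =>
      intervalIntegral.integral_congr_ae_restrict (ae_restrict_of_ae (hF.memLp x).coeFn_toLp)
  refine ((hprim hb).sub (hprim ha)).congr fun x => ?_
  exact intervalIntegral.integral_interval_sub_left (hint x _ _) (hint x _ _)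

end LpContinuous

end LpFamily

section H1Topology

open Set ENNReal Filter Topology

namespace H1

instance : AddCommGroup H1 := Module.addCommMonoidToAddCommGroup ℝ

/-- The embedding of `H¹` into `L² × L²` by the function and its derivative. -/
def toLp : H1 →ₗ[ℝ] Lp ℝ 2 unitMeasure × Lp ℝ 2 unitMeasure where
  toFun v := ((v.memLp_val.mono_exponent le_top).toLp v.val, v.memLp_dval.toLp v.dval)
  map_add' _ _ := rfl
  map_smul' _ _ := rfl

instance : SeminormedAddCommGroup H1 := .induced H1 _ toLp

instance : NormedSpace ℝ H1 := .induced ℝ H1 _ toLp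

lemma continuous_toLp : Continuous toLp :=
  (AddMonoidHomClass.isometry_of_norm toLp fun _ => rfl).continuous

lemma lpContinuous_val : LpContinuous 2 val :=
  ⟨fun v => v.memLp_val.mono_exponent le_top, continuous_fst.comp continuous_toLp⟩

lemma lpContinuous_dval : LpContinuous 2 dval := ⟨memLp_dval, continuous_snd.comp continuous_toLp⟩

lemma norm_eq_norm_toLp_snd {v : H1} (h₀ : v.val 0 = 0) : ‖v‖ = ‖(toLp v).2‖ := by
  have hL2 : ∀ {g : ℝ → ℝ} (hg : MemLp g 2 unitMeasure), ‖hg.toLp g‖ = L2 g := fun hg => by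
    rw [Lp.norm_toLp, toReal_eLpNorm hg.1, L2_eq_lpNorm hg.1]
  have hval : MemLp v.val 2 unitMeasure := v.memLp_val.mono_exponent le_top
  refine max_eq_right ?_
  change ‖hval.toLp v.val‖ ≤ ‖v.memLp_dval.toLp v.dval‖
  rw [hL2, hL2]
  exact L2_le_of_abs_le hval.1 (Real.sqrt_nonneg _) fun x hx => v.abs_val_le_L2 h₀ hx

lemma continuous_of_continuous_toLp_snd {Y : Type*} [TopologicalSpace Y] {φ : Y → H1}
    (h₀ : ∀ y, (φ y).val 0 = 0) (h : Continuous fun y => (toLp (φ y)).2) : Continuous φ := by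
  refine continuous_iff_continuousAt.2 fun y => tendsto_iff_norm_sub_tendsto_zero.2 ?_
  refine (tendsto_iff_norm_sub_tendsto_zero.1 (h.tendsto y)).congr fun z => ?_
  have hsub : (φ z - φ y).val 0 = 0 := by
    rw [show (φ z - φ y).val = (φ z).val - (φ y).val from map_sub valₗ _ _]
    simp [h₀]
  rw [norm_eq_norm_toLp_snd hsub, map_sub, Prod.snd_sub]

end H1

lemma continuous_ip {f : ℝ → ℝ} (hf : MemLp f 2 unitMeasure) : Continuous (ip f) :=
  ((LpContinuous.const hf).mul H1.lpContinuous_val).continuous_integral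

namespace Coeffs

variable (P : Coeffs)

lemma continuous_B : Continuous fun w : H1 × H1 => P.B w.1 w.2 := by
  have hval₁ := H1.lpContinuous_val.comp (continuous_fst (X := H1) (Y := H1))
  have hdval₁ := H1.lpContinuous_dval.comp (continuous_fst (X := H1) (Y := H1))
  have hval₂ := H1.lpContinuous_val.comp (continuous_snd (X := H1) (Y := H1))
  have hdval₂ := H1.lpContinuous_dval.comp (continuous_snd (X := H1) (Y := H1))
  have ha := ((LpContinuous.const P.memLp_a).mul (r := 2) hdval₁).mul (r := 1) hdval₂
  have hb := ((LpContinuous.const P.memLp_b).mul (r := 2) hdval₁).mul (r := 1) hval₂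
  have hc := ((LpContinuous.const P.memLp_c).mul (r := 2) hval₁).mul (r := 1) hval₂
  exact ((ha.add hb).add hc).continuous_integral

lemma lpContinuous_res {f : ℝ → ℝ} (hf : MemLp f 2 unitMeasure) : LpContinuous 2 (P.res f) := by
  have ha := (LpContinuous.const P.memLp_a').mul (r := 2) H1.lpContinuous_dval
  have hb := (LpContinuous.const P.memLp_b).mul (r := 2) H1.lpContinuous_dval
  have hc := (LpContinuous.const P.memLp_c).mul (r := 2) H1.lpContinuous_val
  exact (((LpContinuous.const hf).add ha).sub hb).sub hc

lemma continuous_stiffness {ι : Type*} : Continuous (P.stiffness (ι := ι)) :=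
  continuous_matrix fun i j => P.continuous_B.comp
    (f := fun φ : ι → H1 => (φ j, φ i)) ((continuous_apply j).prodMk (continuous_apply i))

lemma continuous_galerkin {ι : Type*} [Fintype ι] [DecidableEq ι] {f : ℝ → ℝ}
    (hf : MemLp f 2 unitMeasure) {Y : Type*} [TopologicalSpace Y] {φ : Y → ι → H1}
    (hφ : Continuous φ) (hdet : ∀ y, (P.stiffness (φ y)).det ≠ 0) :
    Continuous fun y => P.galerkin f (φ y) := by
  have hA : Continuous fun y => P.stiffness (φ y) := P.continuous_stiffness.comp hφ
  have hinv : Continuous fun y => (P.stiffness (φ y))⁻¹ := by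
    simp only [Matrix.inv_def, Ring.inverse_eq_inv']
    exact (hA.matrix_det.inv₀ hdet).smul hA.matrix_adjugate
  have hload : Continuous fun y i => ip f (φ y i) :=
    continuous_pi fun i => (continuous_ip hf).comp ((continuous_apply i).comp hφ)
  exact continuous_finsetSum _ fun k _ =>
    ((continuous_apply k).comp (hinv.matrix_mulVec hload)).smul ((continuous_apply k).comp hφ)

end Coeffs

lemma symmDiff_Ioc_subset (p q p' q' : ℝ) :
    symmDiff (Ioc p q) (Ioc p' q') ⊆ uIcc p p' ∪ uIcc q q' := by
  intro t ht
  simp only [mem_symmDiff, mem_Ioc, mem_union, mem_uIcc] at ht ⊢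
  grind

lemma tendsto_unitMeasure_symmDiff_Ioc {Y : Type*} {l : Filter Y} {p q : Y → ℝ} {p₀ q₀ : ℝ}
    (hp : Tendsto p l (𝓝 p₀)) (hq : Tendsto q l (𝓝 q₀)) :
    Tendsto (fun y => unitMeasure (symmDiff (Ioc (p y) (q y)) (Ioc p₀ q₀))) l (𝓝 0) := by
  have hlim : Tendsto (fun y => ENNReal.ofReal |p₀ - p y| + ENNReal.ofReal |q₀ - q y|) l (𝓝 0) := by
    simpa using (tendsto_ofReal (hp.const_sub p₀).abs).add (tendsto_ofReal (hq.const_sub q₀).abs)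
  refine tendsto_of_tendsto_of_tendsto_of_le_of_le tendsto_const_nhds hlim
    (fun _ => zero_le) fun y => (Measure.restrict_apply_le _ _).trans ?_
  calc volume (symmDiff (Ioc (p y) (q y)) (Ioc p₀ q₀))
      ≤ volume (uIcc (p y) p₀) + volume (uIcc (q y) q₀) :=
        (measure_mono (symmDiff_Ioc_subset _ _ _ _)).trans (measure_union_le _ _)
    _ = _ := by rw [Real.volume_interval, Real.volume_interval]

lemma continuous_ramp {Y : Type*} [TopologicalSpace Y] {p q : Y → ℝ} (hp : Continuous p)
    (hq : Continuous q) (hpq : ∀ y, p y < q y) : Continuous fun y => ramp (p y) (q y) := by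
  refine H1.continuous_of_continuous_toLp_snd (fun _ => intervalIntegral.integral_same) ?_
  have hind : Continuous fun y => indicatorConstLp (μ := unitMeasure) 2
      (measurableSet_Ioc (a := p y) (b := q y)) (measure_ne_top _ _) (1 : ℝ) :=
    continuous_indicatorConstLp_set ofNat_ne_top fun y =>
      tendsto_unitMeasure_symmDiff_Ioc (hp.tendsto y) (hq.tendsto y)
  refine (((hq.sub hp).inv₀ fun y => (sub_pos.2 (hpq y)).ne').smul hind).congr fun y => ?_
  refine (MemLp.toLp_const_smul _ _).symm.trans (MemLp.toLp_congr _ (H1.memLp_dval _)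
    (ae_of_all _ fun t => ?_))
  change (q y - p y)⁻¹ * (Ioc (p y) (q y)).indicator (fun _ => 1) t
    = (Ioc (p y) (q y)).indicator (fun _ => (q y - p y)⁻¹) t
  simp only [indicator_apply, mul_ite, mul_one, mul_zero]

end H1Topology

section MeshTopology

open Set Filter Topology

namespace Mesh

variable {N : ℕ}

instance : TopologicalSpace (Mesh N) := .induced x inferInstance

lemma continuous_x (i : ℕ) : Continuous fun m : Mesh N => m.x i :=
  (continuous_apply i).comp continuous_induced_dom

lemma continuous_h (i : ℕ) : Continuous fun m : Mesh N => m.h i :=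
  (continuous_x (i + 1)).sub (continuous_x i)

lemma continuous_interp (z : ℕ → ℝ) : Continuous fun m : Mesh N => m.interp z := by
  change Continuous fun m : Mesh N =>
    ∑ i ∈ Finset.range N, (z (i + 1) - z i) • ramp (m.x i) (m.x (i + 1))
  exact continuous_finsetSum _ fun i hi => (continuous_ramp (continuous_x i)
    (continuous_x (i + 1)) fun m => m.x_mono i (Finset.mem_range.1 hi)).fun_const_smul _

lemma continuous_fe (P : Coeffs) {f : ℝ → ℝ} (hf : MemLp f 2 unitMeasure) :
    Continuous fun m : Mesh N => m.fe P f :=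
  P.continuous_galerkin hf (continuous_pi fun k => continuous_interp (Pi.single k 1))
    fun m => m.det_stiffness_hat_ne_zero P

lemma lpContinuous_res_fe (P : Coeffs) {f : ℝ → ℝ} (hf : MemLp f 2 unitMeasure) :
    LpContinuous 2 fun m : Mesh N => P.res f (m.fe P f) :=
  (P.lpContinuous_res hf).comp (continuous_fe P hf)

variable {F : Mesh N → ℝ → ℝ}

lemma continuous_avg (hF : LpContinuous 2 F) {i : ℕ} (hi : i < N) :
    Continuous fun m : Mesh N => m.avg (F m) i := by
  have hint : ∀ m : Mesh N, ∫ t in (m.x i)..(m.x (i + 1)), (F m * F m) t ∂unitMeasure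
      = ∫ t in (m.x i)..(m.x (i + 1)), F m t ^ 2 := fun m => by
    rw [intervalIntegral.integral_of_le (m.x_mono i hi).le,
      intervalIntegral.integral_of_le (m.x_mono i hi).le, unitMeasure,
      Measure.restrict_restrict_of_subset
        (Ioc_subset_Ioc (m.x_mem_Icc hi.le).1 (m.x_mem_Icc hi).2)]
    simp only [Pi.mul_apply, sq]
  have hcont := (hF.mul (r := 1) hF).continuous_intervalIntegral (continuous_x i)
    (continuous_x (i + 1))
  exact ((continuous_const.div (continuous_h i) fun m => (m.h_pos hi).ne').mul
    (hcont.congr hint)).sqrt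

lemma continuous_alpha (hF : LpContinuous 2 F) : Continuous fun m : Mesh N => m.alpha (F m) :=
  (continuous_finsetSum _ fun i hi => (continuous_h i).mul
    ((continuous_avg hF (Finset.mem_range.1 hi)).rpow_const fun _ => .inr (by norm_num))).pow 3

lemma continuous_rho (hF : LpContinuous 2 F) (hα : ∀ m : Mesh N, m.alpha (F m) ≠ 0) {i : ℕ}
    (hi : i < N) : Continuous fun m : Mesh N => m.rho (F m) i :=
  ((continuous_const (y := (1 : ℝ))).add (((continuous_alpha hF).inv₀ hα).mul
    ((continuous_avg hF hi).pow 2))).rpow_const fun _ => .inr (by norm_num)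

end Mesh

end MeshTopology

section Equidistribution

open Set

namespace Mesh

variable {N : ℕ} (m : Mesh N) (g : ℝ → ℝ)

lemma one_le_rho (i : ℕ) : 1 ≤ m.rho g i :=
  Real.one_le_rpow (le_add_of_nonneg_right
    (mul_nonneg (inv_nonneg.2 (m.alpha_nonneg g)) (sq_nonneg _))) (by norm_num)

lemma one_le_sigma : 1 ≤ m.sigma g := by
  rw [sigma, ← m.sum_h]
  exact Finset.sum_le_sum fun i hi =>
    le_mul_of_one_le_left (m.h_pos (Finset.mem_range.1 hi)).le (m.one_le_rho g i)

lemma rho_mul_h_pow_three {i : ℕ} (hi : i < N) : (m.rho g i * m.h i) ^ 3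
    = m.h i ^ 3 + m.h i ^ 2 * ((m.alpha g)⁻¹ * ∫ t in (m.x i)..(m.x (i + 1)), g t ^ 2) := by
  have hbase : 0 ≤ 1 + (m.alpha g)⁻¹ * m.avg g i ^ 2 :=
    add_nonneg zero_le_one (mul_nonneg (inv_nonneg.2 (m.alpha_nonneg g)) (sq_nonneg _))
  have hrho : m.rho g i ^ 3 = 1 + (m.alpha g)⁻¹ * m.avg g i ^ 2 := by
    rw [rho, ← Real.rpow_mul_natCast hbase]
    norm_num
  rw [mul_pow, hrho, ← m.h_mul_sq_avg g hi]
  ring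

variable {g}

lemma h_mul_sq_avg_le_sq_L2 (hg : MemLp g 2 unitMeasure) {i : ℕ} (hi : i < N) :
    m.h i * m.avg g i ^ 2 ≤ L2 g ^ 2 :=
  m.sum_h_mul_sq_avg hg ▸ Finset.single_le_sum
    (fun _ hj => mul_nonneg (m.h_pos (Finset.mem_range.1 hj)).le (sq_nonneg _))
    (Finset.mem_range.2 hi)

lemma h_le_one {i : ℕ} (hi : i < N) : m.h i ≤ 1 :=
  m.sum_h ▸ Finset.single_le_sum (fun _ hj => (m.h_pos (Finset.mem_range.1 hj)).le)
    (Finset.mem_range.2 hi)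

lemma rho_mul_h_le {C : ℝ} (hg : MemLp g 2 unitMeasure) (hC : (m.alpha g)⁻¹ * L2 g ^ 2 ≤ C)
    {i : ℕ} (hi : i < N) {b : ℝ} (hb : 0 ≤ b) (hh : m.h i ^ 2 * (1 + C) ≤ b ^ 3) :
    m.rho g i * m.h i ≤ b := by
  have hα : 0 ≤ (m.alpha g)⁻¹ := inv_nonneg.2 (m.alpha_nonneg g)
  refine le_of_pow_le_pow_left₀ three_ne_zero hb ?_
  calc (m.rho g i * m.h i) ^ 3
      = m.h i ^ 3 + m.h i ^ 2 * ((m.alpha g)⁻¹ * (m.h i * m.avg g i ^ 2)) := by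
        rw [m.rho_mul_h_pow_three g hi, m.h_mul_sq_avg g hi]
    _ ≤ m.h i ^ 2 + m.h i ^ 2 * C := by
        gcongr ?_ + _ * ?_
        · exact pow_le_pow_of_le_one (m.h_pos hi).le (m.h_le_one hi) (by norm_num)
        · exact (mul_le_mul_of_nonneg_left (m.h_mul_sq_avg_le_sq_L2 hg hi) hα).trans hC
    _ = m.h i ^ 2 * (1 + C) := by ring
    _ ≤ b ^ 3 := hh

lemma isEquidistributing_of_L2_eq_zero (hg : MemLp g 2 unitMeasure) (hL2 : L2 g = 0)
    (hh : ∀ i < N, m.h i = 1 / N) : m.IsEquidistributing g := by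
  have hrho : ∀ i < N, m.rho g i = 1 := fun i hi => by
    have hle := m.h_mul_sq_avg_le_sq_L2 hg hi
    rw [hL2, zero_pow two_ne_zero] at hle
    have havg : m.avg g i ^ 2 = 0 :=
      (nonpos_of_mul_nonpos_right hle (m.h_pos hi)).antisymm (sq_nonneg _)
    rw [rho, havg, mul_zero, add_zero, Real.one_rpow]
  have hsigma : m.sigma g = 1 := by
    rw [sigma, ← m.sum_h]
    exact Finset.sum_congr rfl fun i hi => by rw [hrho i (Finset.mem_range.1 hi), one_mul]
  exact fun i hi => by rw [hrho i hi, one_mul, hsigma, hh i hi]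

/-- The mesh with element lengths `ℓ`. -/
def ofLengths (ℓ : Fin N → ℝ) (hpos : ∀ i, 0 < ℓ i) (hsum : ∑ i, ℓ i = 1) : Mesh N where
  x k := ∑ i with i.val < k, ℓ i
  x_zero := by simp
  x_last := by simp [hsum]
  x_mono k hk := Finset.sum_lt_sum_of_subset (i := ⟨k, hk⟩)
    (Finset.monotone_filter_right _ fun _ _ h => h.trans k.lt_succ_self)
    (by simp) (by simp) (hpos _) fun i _ _ => (hpos i).le

lemma ofLengths_h (ℓ : Fin N → ℝ) (hpos : ∀ i, 0 < ℓ i) (hsum : ∑ i, ℓ i = 1) (i : Fin N) :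
    (ofLengths ℓ hpos hsum).h i = ℓ i := by
  have hfilter : Finset.univ.filter (fun j : Fin N => j.val < i.val + 1)
      = insert i (Finset.univ.filter fun j : Fin N => j.val < i.val) := by
    ext j
    simp only [Finset.mem_filter, Finset.mem_univ, true_and, Finset.mem_insert, Fin.ext_iff]
    omega
  change ∑ j : Fin N with j.val < i.val + 1, ℓ j - ∑ j : Fin N with j.val < i.val, ℓ j = ℓ i
  rw [hfilter, Finset.sum_insert (by simp), add_sub_cancel_right]

lemma continuous_ofLengths {Y : Type*} [TopologicalSpace Y] {ℓ : Y → Fin N → ℝ}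
    (hℓ : Continuous ℓ) (hpos : ∀ y i, 0 < ℓ y i) (hsum : ∀ y, ∑ i, ℓ y i = 1) :
    Continuous fun y => ofLengths (ℓ y) (hpos y) (hsum y) :=
  continuous_induced_rng.2 (continuous_pi fun k =>
    show Continuous fun y => ∑ i : Fin N with i.val < k, ℓ y i from
      continuous_finsetSum _ fun i _ => (continuous_apply i).comp hℓ)

lemma exists_isEquidistributing_of_L2_eq_zero {F : Mesh N → ℝ → ℝ} (hN : 0 < N)
    (hF : ∀ m, MemLp (F m) 2 unitMeasure) (hL2 : ∀ m, L2 (F m) = 0) :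
    ∃ m : Mesh N, m.IsEquidistributing (F m) := by
  have hN' : (0 : ℝ) < N := Nat.cast_pos.2 hN
  let m : Mesh N := ofLengths (fun _ => 1 / N) (fun _ => one_div_pos.2 hN')
    (by simp [hN'.ne'])
  exact ⟨m, m.isEquidistributing_of_L2_eq_zero (hF m) (hL2 m) fun i hi =>
    ofLengths_h _ _ _ ⟨i, hi⟩⟩

lemma exists_pos_sq_mul_le {n D : ℝ} (hn : 1 ≤ n) (hD : 1 ≤ D) :
    ∃ ε : ℝ, 0 < ε ∧ n * ε ≤ 1 ∧ ε ^ 2 * D ≤ (1 / n) ^ 3 := by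
  have hn₀ : 0 < n := one_pos.trans_le hn
  have hD₀ : 0 < D := one_pos.trans_le hD
  have hnD : 1 ≤ n * D := one_le_mul_of_one_le_of_one_le hn hD
  refine ⟨1 / (n ^ 2 * D), by positivity, ?_, ?_⟩ <;> field_simp <;> exact hnD

theorem exists_isEquidistributing {F : Mesh N → ℝ → ℝ} (hN : 0 < N) (hF : LpContinuous 2 F)
    (hα : ∀ m : Mesh N, 0 < m.alpha (F m)) {C : ℝ}
    (hC : ∀ m : Mesh N, (m.alpha (F m))⁻¹ * L2 (F m) ^ 2 ≤ C) :
    ∃ m : Mesh N, m.IsEquidistributing (F m) := by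
  have : Nonempty (Fin N) := ⟨⟨0, hN⟩⟩
  have hN₁ : (1 : ℝ) ≤ N := Nat.one_le_cast.2 hN
  have hC₀ : 0 ≤ max C 0 := le_max_right _ _
  obtain ⟨ε, hε, hNε, hεC⟩ := exists_pos_sq_mul_le hN₁ (le_add_of_nonneg_right hC₀)
  have hy₀ : ∀ y : stdSimplex ℝ (Fin N), ∀ i, 0 ≤ (1 - N * ε) * y.1 i := fun y i =>
    mul_nonneg (sub_nonneg.2 hNε) (y.2.1 i)
  let m : stdSimplex ℝ (Fin N) → Mesh N := fun y => ofLengths (fun i => ε + (1 - N * ε) * y.1 i)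
    (fun i => add_pos_of_pos_of_nonneg hε (hy₀ y i))
    (by simp [Finset.sum_add_distrib, ← Finset.mul_sum, y.2.2])
  have hm : Continuous m := continuous_ofLengths (continuous_pi fun i =>
    continuous_const.add (continuous_const.mul
      ((continuous_apply i).comp continuous_subtype_val))) _ _
  have hsigma : ∀ y, ∑ i : Fin N, (m y).rho (F (m y)) i * (m y).h i = (m y).sigma (F (m y)) :=
    fun y => (Finset.sum_range fun i => (m y).rho (F (m y)) i * (m y).h i).symm
  obtain ⟨y, hy⟩ := exists_forall_eq_average
    (g := fun y i => (m y).rho (F (m y)) i * (m y).h i)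
    (continuous_pi fun i => ((continuous_rho hF (fun m => (hα m).ne') i.2).mul
      (continuous_h i)).comp hm) fun y i hyi => by
    rw [hsigma, Fintype.card_fin]
    have hh : (m y).h i = ε := by simp [m, ofLengths_h, hyi]
    calc (m y).rho (F (m y)) i * (m y).h i
        ≤ 1 / N := (m y).rho_mul_h_le (hF.memLp _) ((hC (m y)).trans (le_max_left _ 0)) i.2
          (by positivity) (by rwa [hh])
      _ ≤ (m y).sigma (F (m y)) / N :=
          div_le_div_of_nonneg_right ((m y).one_le_sigma _) N.cast_nonneg
  refine ⟨m y, fun i hi => ?_⟩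
  rw [hy ⟨i, hi⟩, hsigma, Fintype.card_fin]

end Mesh

end Equidistribution

theorem statement5_general (P : Coeffs) (f : ℝ → ℝ) (hf : MemL2 f) (N : ℕ) (hN : 0 < N) :
    ∃ (m : Mesh N) (uh : H1), P.IsFESolution f m uh ∧ m.IsEquidistributing (P.res f uh) := by
  have hf₂ := hf.memLp
  have hfe : ∀ m : Mesh N, P.IsFESolution f m (m.fe P f) := fun m =>
    m.isFESolution_fe P (hf₂.mono_exponent one_le_two)
  have hres := Mesh.lpContinuous_res_fe (N := N) P hf₂
  suffices ∃ m : Mesh N, m.IsEquidistributing (P.res f (m.fe P f)) from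
    this.imp fun m hm => ⟨m.fe P f, hfe m, hm⟩
  by_cases hL2 : L2 f = 0
  · refine Mesh.exists_isEquidistributing_of_L2_eq_zero hN hres.memLp fun m => ?_
    exact (((hfe m).L2_res_le_stabConst_mul hf₂).trans_eq (by rw [hL2, mul_zero])).antisymm
      (Real.sqrt_nonneg _)
  · have hL1 := L1_pos hf₂ hL2
    exact Mesh.exists_isEquidistributing hN hres (fun m => (hfe m).alpha_res_pos hf₂ hL1)
      fun m => (hfe m).inv_alpha_mul_sq_L2_res_le hf₂ hL1

/-- existence of equidistributing meshes (Theorem 2.4). -/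
theorem statement5 (P : Coeffs) (f : ℝ → ℝ) (hf2 : MemL2 f) (hfinf : MemLinf f)
    (u : H1) (hu : P.IsWeakSolution f u) (hu2 : u.IsH2) :
    ∃ N₀ : ℕ, ∀ N : ℕ, N₀ ≤ N →
      ∃ (m : Mesh N) (uh : H1), P.IsFESolution f m uh ∧
        m.IsEquidistributing (P.res f uh) :=
  ⟨1, fun N hN => statement5_general P f hf2 N hN⟩

end EquidMesh
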